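/- arXiv:1212.1529 — 6 statements merged into one kernel-verified Lean document; each statement's English description precedes it below -/
import Mathlib

section
/- Let J be a linear order, let B be a finite Boolean algebra equipped with a family (P_j)_{j∈J} of ideals with P_i ⊆ P_j whenever i ≤ j, and let ≺ be a proper ordering of the atoms of B. Let A be a Boolean subalgebra of B, let a be an atom of A, and let b be the ≺-greatest atom of B lying below a. Then for every h ∈ J: a ∈ P_h if and only if b ∈ P_h. -/
/-!
STATEMENT 0: Let J be a linear order, let B be a finite Boolean algebra equipped with a
family (P_j)_{j∈J} of ideals with P_i ⊆ P_j whenever i ≤ j, and let ≺ be a proper ordering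
of the atoms of B. Let A be a Boolean subalgebra of B, let a be an atom of A, and let b be
the ≺-greatest atom of B lying below a. Then for every h ∈ J: a ∈ P_h iff b ∈ P_h.
-/

theorem atom_ideal_membership_via_greatest_atom
    {J : Type} [LinearOrder J] {α : Type} [BooleanAlgebra α] [Fintype α]
    (P : J → Set α)
    -- each P j is an ideal
    (h_not_top : ∀ j, (⊤ : α) ∉ P j)
    (h_lower : ∀ j, ∀ x ∈ P j, ∀ y, y ≤ x → y ∈ P j)
    (h_sup_mem : ∀ j, ∀ x ∈ P j, ∀ y ∈ P j, x ⊔ y ∈ P j)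
    -- the family is increasing
    (h_mono : ∀ i j : J, i ≤ j → P i ⊆ P j)
    -- ≺ is an ordering of the atoms of B ...
    (lt : α → α → Prop)
    (h_irrefl : ∀ x, IsAtom x → ¬ lt x x)
    (h_trans : ∀ x y z, IsAtom x → IsAtom y → IsAtom z → lt x y → lt y z → lt x z)
    (h_total : ∀ x y, IsAtom x → IsAtom y → x ≠ y → lt x y ∨ lt y x)
    -- ... which is proper
    (h_proper : ∀ x y, IsAtom x → IsAtom y → (∃ i, x ∈ P i ∧ y ∉ P i) → lt x y)
    -- A is a Boolean subalgebra of B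
    (S : Set α)
    (hS_bot : ⊥ ∈ S) (hS_top : ⊤ ∈ S)
    (hS_sup : ∀ x ∈ S, ∀ y ∈ S, x ⊔ y ∈ S)
    (hS_inf : ∀ x ∈ S, ∀ y ∈ S, x ⊓ y ∈ S)
    (hS_compl : ∀ x ∈ S, xᶜ ∈ S)
    -- a is an atom of the subalgebra A
    (a : α) (haS : a ∈ S) (ha_ne : a ≠ ⊥)
    (ha_min : ∀ x ∈ S, x ≤ a → x = ⊥ ∨ x = a)
    -- b is the ≺-greatest atom of B lying below a
    (b : α) (hb_atom : IsAtom b) (hb_le : b ≤ a)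
    (hb_greatest : ∀ c, IsAtom c → c ≤ a → c ≠ b → lt c b)
    (h : J) :
    a ∈ P h ↔ b ∈ P h := by
  constructor
  · intro h1
    exact h_lower h a h1 b hb_le
  · intro hb
    have hatoms : ∀ c, IsAtom c → c ≤ a → c ∈ P h := by
      intro c hc hca
      by_contra hcP
      have h1 : lt b c := h_proper b c hb_atom hc ⟨h, hb, hcP⟩
      have hne : c ≠ b := by
        rintro rfl
        exact hcP hb
      have h2 : lt c b := hb_greatest c hc hca hne
      exact h_irrefl b hb_atom (h_trans b c b hb_atom hc hb_atom h1 h2)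
    obtain ⟨m, hm⟩ := Set.Finite.exists_maximal
      (Set.toFinite {x : α | x ≤ a ∧ x ∈ P h}) ⟨b, hb_le, hb⟩
    obtain ⟨hma, hmP⟩ := hm.prop
    by_cases hbot : a \ m = ⊥
    · have : a ≤ m := sdiff_eq_bot_iff.mp hbot
      exact h_lower h m hmP a this
    · exfalso
      obtain ⟨c, hc, hcle⟩ := (IsAtomic.eq_bot_or_exists_atom_le (a \ m)).resolve_left hbot
      have hca : c ≤ a := hcle.trans sdiff_le
      have hle : m ⊔ c ≤ m := hm.le_of_ge
        ⟨sup_le hma hca, h_sup_mem h m hmP c (hatoms c hc hca)⟩ le_sup_left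
      have hcm : c ≤ m := le_sup_right.trans hle
      have hd : Disjoint (a \ m) m := disjoint_sdiff_self_left
      exact hc.1 (le_bot_iff.mp (hd hcle hcm))
end

section
/- The class na(B_J) is hereditary: if (B, (P_j)_{j∈J}, <) belongs to na(B_J) and A is a Boolean subalgebra of B (a subset containing 0 and 1 and closed under ∨, ∧, ¬), then A, equipped with the predicates P_j ∩ A and the restriction of < to A, belongs to na(B_J); in particular the restricted order is a natural ordering of A and A has at least one atom lying in no P_j ∩ A. -/
/-- A finite Boolean algebra with a `J`-indexed family of distinguished subsets
and a distinguished binary relation (the linear ordering). -/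
structure OrdAlg (J : Type) [LinearOrder J] : Type 1 where
  carrier : Type
  [ba : BooleanAlgebra carrier]
  [fin : Fintype carrier]
  P : J → Set carrier
  lt : carrier → carrier → Prop

attribute [instance] OrdAlg.ba OrdAlg.fin

namespace OrdAlg

variable {J : Type} [LinearOrder J]

/-- The predicates form an increasing family of (nontrivial) ideals: this makes
the structure a `J`-algebra. -/
def IdealFam (A : OrdAlg J) : Prop :=
  (∀ j : J, (⊤ : A.carrier) ∉ A.P j) ∧
  (∀ j : J, ∀ x ∈ A.P j, ∀ y : A.carrier, y ≤ x → y ∈ A.P j) ∧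
  (∀ j : J, ∀ x ∈ A.P j, ∀ y ∈ A.P j, x ⊔ y ∈ A.P j) ∧
  (∀ i j : J, i ≤ j → A.P i ⊆ A.P j)

/-- The ordering is proper on atoms: atoms in some ideal `P i` come before atoms not in `P i`. -/
def Proper (A : OrdAlg J) : Prop :=
  ∀ a b : A.carrier, IsAtom a → IsAtom b → (∃ i : J, a ∈ A.P i ∧ b ∉ A.P i) → A.lt a b

/-- The ordering is natural: a strict total (i.e. linear) order whose restriction to the
atoms is proper, and which is the antilexicographical extension of its restriction to atoms:
for distinct `a`, `b`, `a < b` iff the `<`-greatest atom lying below exactly one of `a`, `b`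
lies below `b`. -/
def Natural (A : OrdAlg J) : Prop :=
  IsStrictTotalOrder A.carrier A.lt ∧ A.Proper ∧
  ∀ a b : A.carrier, a ≠ b →
    (A.lt a b ↔ ∃ c : A.carrier, IsAtom c ∧ c ≤ b ∧ ¬ c ≤ a ∧
      ∀ d : A.carrier, IsAtom d → ¬ (d ≤ a ↔ d ≤ b) → d = c ∨ A.lt d c)

/-- Membership in the class `na(B_J)`: a naturally ordered `J`-algebra with at least one
atom lying in no `P j`. -/
def InNaBJ (A : OrdAlg J) : Prop :=
  A.IdealFam ∧ A.Natural ∧ ∃ a : A.carrier, IsAtom a ∧ ∀ j : J, a ∉ A.P j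

/-- Membership in the class `na(B_J^u)`: a naturally ordered `J`-algebra in which all atoms
except exactly one belong to some `P j`. -/
def InNaBJu (A : OrdAlg J) : Prop :=
  A.IdealFam ∧ A.Natural ∧ ∃! a : A.carrier, IsAtom a ∧ ∀ j : J, a ∉ A.P j

/-- An embedding of ordered `J`-algebras: an injective map preserving `⊔`, `⊓`, `ᶜ`,
`⊥`, `⊤`, the linear order and each predicate. -/
structure Emb (A B : OrdAlg J) : Type where
  toFun : A.carrier → B.carrier
  inj : Function.Injective toFun
  map_sup : ∀ x y : A.carrier, toFun (x ⊔ y) = toFun x ⊔ toFun y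
  map_inf : ∀ x y : A.carrier, toFun (x ⊓ y) = toFun x ⊓ toFun y
  map_compl : ∀ x : A.carrier, toFun xᶜ = (toFun x)ᶜ
  map_bot : toFun ⊥ = ⊥
  map_top : toFun ⊤ = ⊤
  map_lt : ∀ x y : A.carrier, A.lt x y ↔ B.lt (toFun x) (toFun y)
  map_P : ∀ (j : J) (x : A.carrier), x ∈ A.P j ↔ toFun x ∈ B.P j

/-- The copies of `A` in `C`: images of embeddings of `A` into `C`. -/
def Copies (A C : OrdAlg J) : Set (Set C.carrier) :=
  {S | ∃ e : Emb A C, Set.range e.toFun = S}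

end OrdAlg

/-- A Boolean subalgebra: a subset containing `⊥` and `⊤` and closed under `⊔`, `⊓`, `ᶜ`. -/
def IsSubalgebraSet {α : Type} [BooleanAlgebra α] (S : Set α) : Prop :=
  ⊥ ∈ S ∧ ⊤ ∈ S ∧ (∀ x ∈ S, ∀ y ∈ S, x ⊔ y ∈ S) ∧
    (∀ x ∈ S, ∀ y ∈ S, x ⊓ y ∈ S) ∧ (∀ x ∈ S, xᶜ ∈ S)

/-- `a` is an atom of the subalgebra `S`: a minimal nonzero element of `S`. -/
def IsAtomIn {α : Type} [BooleanAlgebra α] (S : Set α) (a : α) : Prop :=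
  a ∈ S ∧ a ≠ ⊥ ∧ ∀ x ∈ S, x ≤ a → x = ⊥ ∨ x = a

/-!
STATEMENT 1: The class na(B_J) is hereditary: if (B, (P_j), <) belongs to na(B_J) and A is a
Boolean subalgebra of B, then A, with the predicates P_j ∩ A and the restriction of < to A,
belongs to na(B_J): the predicates form an increasing family of ideals of A, the restricted
order is a natural ordering of A, and A has at least one atom lying in no P_j ∩ A.
-/

theorem atomIn_above {α : Type} [BooleanAlgebra α] [Finite α] (S : Set α)
    (hS : IsSubalgebraSet S) (p : α) (hp : IsAtom p) : ∃ C, IsAtomIn S C ∧ p ≤ C := by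
  obtain ⟨-, htop, -, hinf, hcompl⟩ := hS
  obtain ⟨C, hC⟩ := (Set.toFinite {x : α | x ∈ S ∧ p ≤ x}).exists_minimal ⟨⊤, htop, le_top⟩
  have hCS : C ∈ S := hC.prop.1
  have hpC : p ≤ C := hC.prop.2
  refine ⟨C, ⟨hCS, ?_, ?_⟩, hpC⟩
  · rintro rfl
    exact hp.1 (le_bot_iff.mp hpC)
  · intro x hx hxC
    by_cases hpx : p ≤ x
    · exact Or.inr (le_antisymm hxC (hC.le_of_le ⟨hx, hpx⟩ hxC))
    · left
      have h1 : p ≤ xᶜ := (hp.not_le_iff_disjoint.mp hpx).le_compl_right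
      have h2 : C ≤ xᶜ ⊓ C :=
        hC.le_of_le ⟨hinf _ (hcompl _ hx) _ hCS, le_inf h1 hpC⟩ inf_le_right
      have h3 : x ≤ xᶜ := hxC.trans (h2.trans inf_le_left)
      exact le_bot_iff.mp (by simpa using le_inf le_rfl h3)

theorem atomIn_cases {α : Type} [BooleanAlgebra α] {S : Set α}
    (hS : IsSubalgebraSet S) {d x : α} (hd : IsAtomIn S d) (hx : x ∈ S) :
    d ≤ x ∨ d ⊓ x = ⊥ := by
  rcases hd.2.2 (d ⊓ x) (hS.2.2.2.1 _ hd.1 _ hx) inf_le_left with h | h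
  · exact Or.inr h
  · exact Or.inl (inf_eq_left.mp h)

theorem naBJ_hereditary {J : Type} [LinearOrder J]
    (B : OrdAlg J) (hB : B.InNaBJ)
    (S : Set B.carrier) (hS : IsSubalgebraSet S) :
    -- (1) the predicates (P_j ∩ S) form an increasing family of ideals of the subalgebra S
    ((∀ j : J, (⊤ : B.carrier) ∉ B.P j ∩ S) ∧
     (∀ j : J, ∀ x ∈ B.P j ∩ S, ∀ y ∈ S, y ≤ x → y ∈ B.P j ∩ S) ∧
     (∀ j : J, ∀ x ∈ B.P j ∩ S, ∀ y ∈ B.P j ∩ S, x ⊔ y ∈ B.P j ∩ S) ∧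
     (∀ i j : J, i ≤ j → B.P i ∩ S ⊆ B.P j ∩ S)) ∧
    -- (2) the restriction of the order to S is a natural ordering of S:
    -- (2a) it is proper on the atoms of S
    (∀ a b : B.carrier, IsAtomIn S a → IsAtomIn S b →
      (∃ i : J, a ∈ B.P i ∩ S ∧ b ∉ B.P i ∩ S) → B.lt a b) ∧
    -- (2b) it is the antilexicographical extension of its restriction to the atoms of S
    (∀ a ∈ S, ∀ b ∈ S, a ≠ b →
      (B.lt a b ↔ ∃ c : B.carrier, IsAtomIn S c ∧ c ≤ b ∧ ¬ c ≤ a ∧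
        ∀ d : B.carrier, IsAtomIn S d → ¬ (d ≤ a ↔ d ≤ b) → d = c ∨ B.lt d c)) ∧
    -- (3) S has at least one atom lying in no P_j ∩ S
    (∃ a : B.carrier, IsAtomIn S a ∧ ∀ j : J, a ∉ B.P j ∩ S) := by
  obtain ⟨⟨hI1, hI2, hI3, hI4⟩, ⟨hlt, hprop, hlex⟩, ⟨p, hp, hpP⟩⟩ := hB
  have asymm : ∀ x y, B.lt x y → B.lt y x → False := fun x y h1 h2 =>
    hlt.irrefl x (hlt.trans _ _ _ h1 h2)
  have total : ∀ x y, x ≠ y → B.lt x y ∨ B.lt y x := by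
    intro x y hxy
    by_contra! h
    exact hxy (hlt.trichotomous x y h.1 h.2)
  have key : ∀ a ∈ S, ∀ b ∈ S, a ≠ b → B.lt a b →
      ∃ c : B.carrier, IsAtomIn S c ∧ c ≤ b ∧ ¬ c ≤ a ∧
        ∀ d : B.carrier, IsAtomIn S d → ¬ (d ≤ a ↔ d ≤ b) → d = c ∨ B.lt d c := by
    intro a ha b hb hab h
    obtain ⟨c, hc, hcb, hca, hmax⟩ := (hlex a b hab).1 h
    obtain ⟨C, hC, hcC⟩ := atomIn_above S hS c hc
    -- atoms below an S-atom that separates a from b separate a from b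
    have sep : ∀ d, IsAtomIn S d → ¬ (d ≤ a ↔ d ≤ b) → ∀ e, IsAtom e → e ≤ d →
        ¬ (e ≤ a ↔ e ≤ b) := by
      intro d hd hdab e he hed hiff
      have f : ∀ x ∈ S, (e ≤ x ↔ d ≤ x) := by
        intro x hx
        refine ⟨fun hex => ?_, hed.trans⟩
        rcases atomIn_cases hS hd hx with h | h
        · exact h
        · exact absurd (le_bot_iff.mp (h ▸ le_inf hed hex)) he.1
      exact hdab (by rw [← f a ha, ← f b hb]; exact hiff)
    have hCb : C ≤ b := by
      rcases atomIn_cases hS hC hb with h | h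
      · exact h
      · exact absurd (le_bot_iff.mp (h ▸ le_inf hcC hcb)) hc.1
    have hCa : ¬ C ≤ a := fun h => hca (hcC.trans h)
    refine ⟨C, hC, hCb, hCa, ?_⟩
    intro d hd hdab
    by_cases hdC : d = C
    · exact Or.inl hdC
    right
    refine (hlex d C hdC).2 ⟨c, hc, hcC, ?_, ?_⟩
    · intro hcd
      rcases atomIn_cases hS hd hC.1 with h | h
      · rcases hC.2.2 d hd.1 h with h | h
        · exact hd.2.1 h
        · exact hdC h
      · exact hc.1 (le_bot_iff.mp (h ▸ le_inf hcd hcC))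
    · intro e he hne
      apply hmax e he
      by_cases hed : e ≤ d
      · exact sep d hd hdab e he hed
      · have heC : e ≤ C := by tauto
        exact sep C hC (by tauto) e he heC
  refine ⟨⟨fun j h => hI1 j h.1, fun j x hx y hy hyx => ⟨hI2 j x hx.1 y hyx, hy⟩,
    fun j x hx y hy => ⟨hI3 j x hx.1 y hy.1, hS.2.2.1 x hx.2 y hy.2⟩,
    fun i j hij x hx => ⟨hI4 i j hij hx.1, hx.2⟩⟩, ?_, ?_, ?_⟩
  · rintro a b ha hb ⟨i, hai, hbi⟩
    have hab : a ≠ b := by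
      rintro rfl
      exact hbi hai
    have hbP : b ∉ B.P i := fun h => hbi ⟨h, hb.1⟩
    rcases total a b hab with h | h
    · exact h
    exfalso
    obtain ⟨c, hc, hca, hcb, hmax⟩ := (hlex b a hab.symm).1 h
    have hcP : c ∈ B.P i := hI2 i a hai.1 c hca
    obtain ⟨m, hm⟩ := (Set.toFinite {x : B.carrier | x ∈ B.P i ∧ x ≤ b}).exists_maximal
      ⟨⊥, hI2 i a hai.1 ⊥ bot_le, bot_le⟩
    have hmP : m ∈ B.P i := hm.prop.1
    have hmb : m ≤ b := hm.prop.2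
    have hne : b \ m ≠ ⊥ := by
      intro h0
      have : b ≤ m := sdiff_eq_bot_iff.mp h0
      exact hbP (hI2 i m hmP b this)
    obtain ⟨q, hq, hqb⟩ := (eq_bot_or_exists_atom_le (b \ m)).resolve_left hne
    have hqb' : q ≤ b := hqb.trans sdiff_le
    have hqm : Disjoint q m := disjoint_sdiff_self_left.mono_left hqb
    have hqP : q ∉ B.P i := by
      intro hqP
      have : m ⊔ q ≤ m := hm.le_of_ge ⟨hI3 i m hmP q hqP, sup_le hmb hqb'⟩ le_sup_left
      exact hq.not_le_iff_disjoint.mpr hqm (le_sup_right.trans this)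
    have hqa : ¬ q ≤ a := fun h => hqP (hI2 i a hai.1 q h)
    have hcq : B.lt c q := hprop c q hc hq ⟨i, hcP, hqP⟩
    rcases hmax q hq (by tauto) with h | h
    · exact hqP (h ▸ hcP)
    · exact asymm _ _ hcq h
  · intro a ha b hb hab
    refine ⟨key a ha b hb hab, ?_⟩
    rintro ⟨c, hc, hcb, hca, hmax⟩
    rcases total a b hab with h | h
    · exact h
    exfalso
    obtain ⟨c', hc', hca', hcb', hmax'⟩ := key b hb a ha hab.symm h
    have hne : c ≠ c' := by
      rintro rfl
      exact hca hca'
    have h1 := (hmax c' hc' (by tauto)).resolve_left hne.symm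
    have h2 := (hmax' c hc (by tauto)).resolve_left hne
    exact asymm _ _ h1 h2
  · obtain ⟨C, hC, hpC⟩ := atomIn_above S hS p hp
    exact ⟨C, hC, fun j h => hpP j (hI2 j C h.1 p hpC)⟩
end

section
/- The class na(B_J) has the amalgamation property: if (A, <_A), (B, <_B), (C, <_C) are structures in na(B_J) and f : (A, <_A) → (B, <_B) and g : (A, <_A) → (C, <_C) are embeddings, then there exist a structure (D, <_D) in na(B_J) and embeddings r : (B, <_B) → (D, <_D) and s : (C, <_C) → (D, <_D) with r ∘ f = s ∘ g. -/
/-!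
STATEMENT 4: The class na(B_J) has the amalgamation property.
-/

namespace NaAmalg

open OrdAlg

variable {J : Type} [LinearOrder J]

/-- The atoms of an algebra. -/
@[ext]
structure At (A : OrdAlg J) : Type where
  val : A.carrier
  prop : IsAtom val

instance (A : OrdAlg J) : Finite (At A) :=
  Finite.of_injective (fun a : At A => a.val) (fun _ _ h => At.ext h)

noncomputable instance (A : OrdAlg J) : Fintype (At A) := Fintype.ofFinite _

/-- Disjoint union without a preset order. -/
inductive Glue (Y Z : Type) : Type where
  | inl : Y → Glue Y Z
  | inr : Z → Glue Y Z

/-- Case distinction. -/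
def Glue.elim {Y Z W : Type} (u : Y → W) (v : Z → W) : Glue Y Z → W
  | .inl y => u y
  | .inr z => v z

instance (Y Z : Type) [Finite Y] [Finite Z] : Finite (Glue Y Z) :=
  Finite.of_surjective (Sum.elim Glue.inl Glue.inr) (by
    rintro (y | z)
    · exact ⟨Sum.inl y, rfl⟩
    · exact ⟨Sum.inr z, rfl⟩)

theorem atomSTO (A : OrdAlg J) (h : A.InNaBJ) :
    IsStrictTotalOrder (At A) (fun a b => A.lt a.1 b.1) := by
  have := h.2.1.1
  exact { trichotomous := fun a b h1 h2 => At.ext (this.trichotomous a.1 b.1 h1 h2)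
          irrefl := fun a => this.irrefl a.1
          trans := fun a b c h1 h2 => this.trans a.1 b.1 c.1 h1 h2 }

open Classical in
noncomputable instance atomOrd (A : OrdAlg J) [h : Fact A.InNaBJ] : LinearOrder (At A) :=
  haveI := atomSTO A h.out
  linearOrderOfSTO (fun a b : At A => A.lt a.1 b.1)

theorem at_lt (A : OrdAlg J) [h : Fact A.InNaBJ] (a b : At A) : a < b ↔ A.lt a.1 b.1 := Iff.rfl

/-- Level of an atom. -/
def lev (A : OrdAlg J) [h : Fact A.InNaBJ] (a : At A) : UpperSet J where
  carrier := {j | a.1 ∈ A.P j}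
  upper' := fun _ _ hij hi => h.out.1.2.2.2 _ _ hij hi

theorem mem_lev (A : OrdAlg J) [h : Fact A.InNaBJ] (a : At A) (j : J) :
    j ∈ lev A a ↔ a.1 ∈ A.P j := Iff.rfl

theorem lev_mono (A : OrdAlg J) [h : Fact A.InNaBJ] : Monotone (lev A) := by
  intro a b hab j hj
  by_contra hc
  have := h.out.2.1.2.1 b.1 a.1 b.2 a.2 ⟨j, hj, hc⟩
  exact absurd hab (not_le.2 this)

theorem mem_P_of_atoms (A : OrdAlg J) (h : A.InNaBJ) (j : J) (h0 : ⊥ ∈ A.P j) :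
    ∀ x : A.carrier, (∀ a : At A, a.1 ≤ x → a.1 ∈ A.P j) → x ∈ A.P j := by
  intro x
  induction x using WellFoundedLT.induction with
  | _ x ih =>
    intro hx
    rcases eq_or_ne x ⊥ with rfl | hne
    · exact h0
    · obtain ⟨a, ha, hax⟩ := (IsAtomic.eq_bot_or_exists_atom_le x).resolve_left hne
      have e : x = a ⊔ x \ a := (sup_sdiff_cancel_right hax).symm
      rw [e]
      refine h.1.2.2.1 j _ (hx ⟨a, ha⟩ hax) _ (ih _ ?_ fun b hb => hx b (hb.trans sdiff_le))
      exact sdiff_lt hax ha.1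

/-- Algebra of subsets of a finite linearly ordered set with levels. -/
noncomputable def setAlg (X : Type) [LinearOrder X] [Fintype X] (U : X → UpperSet J)
    (N : UpperSet J) : OrdAlg J where
  carrier := Set X
  fin := Fintype.ofFinite _
  P := fun j => {s | j ∈ N ∧ ∀ x ∈ s, j ∈ U x}
  lt := fun s t => ∃ c, c ∈ t ∧ c ∉ s ∧ ∀ d, ¬ (d ∈ s ↔ d ∈ t) → d ≤ c

section
variable (X : Type) [LinearOrder X] [Fintype X] (U : X → UpperSet J) (N : UpperSet J)

theorem setAlg_lt (s t : Set X) : (setAlg X U N).lt s t ↔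
    ∃ c, c ∈ t ∧ c ∉ s ∧ ∀ d, ¬ (d ∈ s ↔ d ∈ t) → d ≤ c := Iff.rfl

theorem setAlg_P (s : Set X) (j : J) : s ∈ (setAlg X U N).P j ↔ j ∈ N ∧ ∀ x ∈ s, j ∈ U x := Iff.rfl

theorem setAlg_sto : IsStrictTotalOrder (Set X) (setAlg X U N).lt where
  irrefl := by
    rintro s ⟨c, h1, h2, -⟩
    exact h2 h1
  trans := by
    rintro s t u ⟨c, h1, h2, h3⟩ ⟨d, k1, k2, k3⟩
    rcases lt_trichotomy c d with h | h | h
    · refine ⟨d, k1, fun hd => ?_, fun e he => ?_⟩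
      · exact absurd (h3 d (by tauto)) (not_le.2 h)
      · by_cases hh : e ∈ s ↔ e ∈ t
        · exact k3 e (by tauto)
        · exact (h3 e hh).trans h.le
    · subst h; exact absurd h1 k2
    · refine ⟨c, ?_, h2, fun e he => ?_⟩
      · by_contra hc
        exact absurd (k3 c (by tauto)) (not_le.2 h)
      · by_cases hh : e ∈ s ↔ e ∈ t
        · exact (k3 e (by tauto)).trans h.le
        · exact h3 e hh
  trichotomous := by
    intro s t h1 h2
    by_contra hne
    have hne' : {d | ¬ (d ∈ s ↔ d ∈ t)}.Nonempty := by
      by_contra hemp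
      rw [Set.not_nonempty_iff_eq_empty] at hemp
      apply hne
      ext d
      by_contra hd
      exact (hemp ▸ hd : d ∈ (∅ : Set X))
    obtain ⟨c, hc, hmax⟩ := (Set.toFinite {d | ¬ (d ∈ s ↔ d ∈ t)}).exists_maximalFor id _ hne'
    have hm : ∀ d, ¬ (d ∈ s ↔ d ∈ t) → d ≤ c := fun d hd => by
      rcases le_total d c with h | h
      · exact h
      · exact hmax hd h
    by_cases hcs : c ∈ s
    · have : c ∉ t := fun h => hc (by tauto)
      exact h2 ⟨c, hcs, this, fun d hd => hm d (by tauto)⟩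
    · have : c ∈ t := by by_contra h; exact hc (by tauto)
      exact h1 ⟨c, this, hcs, hm⟩

theorem setAlg_lt_singleton (x y : X) : (setAlg X U N).lt ({x} : Set X) ({y} : Set X) ↔ x < y := by
  rw [setAlg_lt]
  constructor
  · rintro ⟨c, h1, h2, h3⟩
    rw [Set.mem_singleton_iff] at h1 h2
    subst h1
    exact lt_of_le_of_ne (h3 x (by simp; tauto)) (Ne.symm h2)
  · intro h
    refine ⟨y, rfl, h.ne', fun d hd => ?_⟩
    simp only [Set.mem_singleton_iff] at hd
    by_cases h1 : d = x
    · exact h1 ▸ h.le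
    · by_cases h2 : d = y
      · exact h2.le
      · tauto

theorem setAlg_in (hU : Monotone U) (x0 : X) (h0 : ∀ j, j ∉ U x0) :
    (setAlg X U N).InNaBJ := by
  have key : ∀ a : Set X, IsAtom a ↔ ∃ x, a = {x} := fun a => Set.isAtom_iff
  refine ⟨⟨?_, ?_, ?_, ?_⟩, ⟨setAlg_sto X U N, ?_, ?_⟩, ?_⟩
  · rintro j ⟨-, h⟩
    exact h0 j (h x0 trivial)
  · rintro j s ⟨h1, h2⟩ t hts
    exact ⟨h1, fun x hx => h2 x (hts hx)⟩
  · rintro j s ⟨h1, h2⟩ t ⟨h3, h4⟩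
    exact ⟨h1, fun x hx => hx.elim (h2 x) (h4 x)⟩
  · rintro i j hij s ⟨h1, h2⟩
    exact ⟨N.upper hij h1, fun x hx => (U x).upper hij (h2 x hx)⟩
  · rintro a b ha hb ⟨i, hi, hi'⟩
    obtain ⟨x, rfl⟩ := (key a).1 ha
    obtain ⟨y, rfl⟩ := (key b).1 hb
    refine (setAlg_lt_singleton X U N x y).2 ?_
    by_contra hxy
    refine hi' ⟨hi.1, fun z hz => ?_⟩
    rw [Set.mem_singleton_iff] at hz
    subst hz
    exact hU (not_lt.1 hxy) (hi.2 x rfl)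
  · intro s t hne
    have hle : ∀ (x : X) (s : Set X), ({x} : Set X) ≤ s ↔ x ∈ s := fun x s =>
      Set.singleton_subset_iff
    constructor
    · rintro ⟨c, h1, h2, h3⟩
      refine ⟨({c} : Set X), (key _).2 ⟨c, rfl⟩, (hle c t).2 h1, fun h => h2 ((hle c s).1 h), ?_⟩
      intro d hd hd2
      obtain ⟨x, rfl⟩ := (key d).1 hd
      have hx : x ≤ c := h3 x (fun h => hd2 ((hle x s).trans (h.trans (hle x t).symm)))
      rcases hx.eq_or_lt with rfl | h
      · exact Or.inl rfl
      · exact Or.inr ((setAlg_lt_singleton X U N x c).2 h)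
    · rintro ⟨c, hc, h1, h2, h3⟩
      obtain ⟨x, rfl⟩ := (key c).1 hc
      refine ⟨x, (hle x t).1 h1, fun h => h2 ((hle x s).2 h), fun d hd => ?_⟩
      rcases h3 ({d} : Set X) ((key _).2 ⟨d, rfl⟩)
        (fun h => hd ((hle d s).symm.trans (h.trans (hle d t)))) with h | h
      · exact (Set.singleton_injective h).le
      · exact ((setAlg_lt_singleton X U N d x).1 h).le
  · refine ⟨({x0} : Set X), (key _).2 ⟨x0, rfl⟩, fun j hj => h0 j (hj.2 x0 rfl)⟩

theorem atom_le_sup {α : Type} [BooleanAlgebra α] {a x y : α} (ha : IsAtom a) :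
    a ≤ x ⊔ y ↔ a ≤ x ∨ a ≤ y := by
  constructor
  · intro h
    by_contra hc
    push Not at hc
    have h1 := (ha.not_le_iff_disjoint).1 hc.1
    have h2 := (ha.not_le_iff_disjoint).1 hc.2
    have := (h1.sup_right h2).eq_bot_of_le h
    exact ha.1 this
  · rintro (h | h)
    · exact h.trans le_sup_left
    · exact h.trans le_sup_right

theorem atom_le_compl {α : Type} [BooleanAlgebra α] {a x : α} (ha : IsAtom a) :
    a ≤ xᶜ ↔ ¬ a ≤ x := by
  rw [ha.not_le_iff_disjoint, le_compl_iff_disjoint_right]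

theorem atom_ext {α : Type} [BooleanAlgebra α] [Finite α] {x y : α}
    (h : ∀ a, IsAtom a → (a ≤ x ↔ a ≤ y)) : x = y := by
  have key : ∀ x y : α, (∀ a, IsAtom a → (a ≤ x → a ≤ y)) → x ≤ y := by
    intro x y h
    by_contra hxy
    have : x \ y ≠ ⊥ := fun h => hxy (sdiff_eq_bot_iff.1 h)
    obtain ⟨a, ha, hax⟩ := (IsAtomic.eq_bot_or_exists_atom_le (x \ y)).resolve_left this
    rw [le_sdiff] at hax
    exact ha.1 (hax.2.eq_bot_of_le (h a ha hax.1))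
  exact le_antisymm (key x y fun a ha => (h a ha).1) (key y x fun a ha => (h a ha).2)

/-- Embedding into a set algebra. -/
def mkEmb (B : OrdAlg J) [h : Fact B.InNaBJ] (ρ : X → At B) (i : At B → X)
    (hi : StrictMono i) (hρi : ∀ b, ρ (i b) = b) (hle : ∀ x, x ≤ i (ρ x)) (hU : Monotone U)
    (hlev : ∀ b, U (i b) = lev B b) (hN : ∀ j, j ∈ N ↔ ⊥ ∈ B.P j) :
    Emb B (setAlg X U N) :=
  have hinj : Function.Injective (fun b : B.carrier => ({x | (ρ x).1 ≤ b} : Set X)) := by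
    intro x y hxy
    apply atom_ext
    intro a ha
    have := Set.ext_iff.1 hxy (i ⟨a, ha⟩)
    simpa [hρi] using this
  have hlt : ∀ x y : B.carrier, B.lt x y →
      (setAlg X U N).lt ({z | (ρ z).1 ≤ x} : Set X) ({z | (ρ z).1 ≤ y} : Set X) := by
    intro x y hxy
    have hne : x ≠ y := by
      rintro rfl
      exact h.out.2.1.1.irrefl x hxy
    obtain ⟨c, hc, h1, h2, h3⟩ := (h.out.2.1.2.2 x y hne).1 hxy
    refine ⟨i ⟨c, hc⟩, by simpa [hρi] using h1, by simpa [hρi] using h2, fun d hd => ?_⟩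
    refine (hle d).trans (hi.monotone ?_)
    rcases h3 (ρ d).1 (ρ d).2 hd with h | h
    · exact (At.ext h : ρ d = ⟨c, hc⟩).le
    · exact le_of_lt (show ρ d < ⟨c, hc⟩ from h)
  { toFun := fun b => ({x | (ρ x).1 ≤ b} : Set X)
    inj := hinj
    map_sup := fun x y => Set.ext fun z => atom_le_sup (ρ z).2
    map_inf := fun x y => Set.ext fun z => le_inf_iff
    map_compl := fun x => Set.ext fun z => atom_le_compl (ρ z).2
    map_bot := Set.ext fun z => ⟨fun h => (ρ z).2.1 (le_bot_iff.1 h), fun h => h.elim⟩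
    map_top := Set.ext fun z => ⟨fun _ => trivial, fun _ => le_top⟩
    map_lt := fun x y => by
      refine ⟨hlt x y, fun hxy => ?_⟩
      have sto := setAlg_sto X U N
      by_contra hc
      by_cases hc' : B.lt y x
      · exact sto.irrefl _ (sto.trans _ _ _ hxy (hlt y x hc'))
      · obtain rfl := h.out.2.1.1.trichotomous x y hc hc'
        exact sto.irrefl _ hxy
    map_P := fun j x => by
      constructor
      · intro hx
        refine ⟨(hN j).2 (h.out.1.2.1 j x hx ⊥ bot_le), fun z hz => ?_⟩
        refine hU (hle z) ?_
        rw [hlev]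
        exact h.out.1.2.1 j x hx _ hz
      · rintro ⟨h1, h2⟩
        refine mem_P_of_atoms B h.out j ((hN j).1 h1) x fun a ha => ?_
        have := h2 (i a) (by simpa [hρi] using ha)
        rwa [hlev] at this }
end

theorem emb_data {A B : OrdAlg J} [hA : Fact A.InNaBJ] [hB : Fact B.InNaBJ] (f : Emb A B) :
    ∃ (φ : At B → At A) (m : At A → At B), StrictMono m ∧ (∀ a, φ (m a) = a) ∧
      (∀ b, b ≤ m (φ b)) ∧ (∀ a, lev B (m a) = lev A a) ∧
      (∀ (b : At B) (x : A.carrier), b.1 ≤ f.toFun x ↔ (φ b).1 ≤ x) ∧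
      (∀ j, (⊥ : A.carrier) ∈ A.P j ↔ (⊥ : B.carrier) ∈ B.P j) := by
  have hmono : ∀ x y, x ≤ y → f.toFun x ≤ f.toFun y := by
    intro x y hxy
    rw [← sup_eq_right.2 hxy, f.map_sup]
    exact le_sup_left
  have hbot : ∀ j, (⊥ : A.carrier) ∈ A.P j ↔ (⊥ : B.carrier) ∈ B.P j := by
    intro j
    rw [f.map_P, f.map_bot]
  have hφ : ∀ b : At B, ∃ a : At A, b.1 ≤ f.toFun a.1 := by
    intro b
    obtain ⟨x, hx, hmin⟩ := (Set.toFinite {x | b.1 ≤ f.toFun x}).exists_minimalFor id _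
      ⟨⊤, by simp [f.map_top]⟩
    refine ⟨⟨x, ?_, ?_⟩, hx⟩
    · rintro rfl
      apply b.2.1
      simpa [f.map_bot] using hx
    · intro y hy
      have e : x = y ⊔ x \ y := (sup_sdiff_cancel_right hy.le).symm
      have hx' : b.1 ≤ f.toFun y ⊔ f.toFun (x \ y) := by
        rw [← f.map_sup, ← e]; exact hx
      rcases (atom_le_sup b.2).1 hx' with h | h
      · exact absurd (hmin h hy.le) (not_le_of_gt hy)
      · have h2 : x ≤ x \ y := hmin h sdiff_le
        rw [le_sdiff] at h2
        exact (h2.2.symm.eq_bot_of_le hy.le)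
  choose φ hφ using hφ
  have hadj : ∀ (b : At B) (x : A.carrier), b.1 ≤ f.toFun x ↔ (φ b).1 ≤ x := by
    intro b x
    refine ⟨fun h => ?_, fun h => (hφ b).trans (hmono _ _ h)⟩
    by_contra hc
    have := hmono _ _ ((atom_le_compl (φ b).2).2 hc)
    rw [f.map_compl] at this
    exact (atom_le_compl b.2).1 ((hφ b).trans this) h
  have hm : ∀ a : At A, ∃ c : At B, c.1 ≤ f.toFun a.1 ∧ ∀ d : At B, d.1 ≤ f.toFun a.1 → d ≤ c := by
    intro a
    have hne : f.toFun a.1 ≠ ⊥ := fun h => a.2.1 (f.inj (h.trans f.map_bot.symm))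
    obtain ⟨c, hc, hca⟩ := (IsAtomic.eq_bot_or_exists_atom_le _).resolve_left hne
    obtain ⟨x, hx, hmax⟩ := (Set.toFinite {x : At B | x.1 ≤ f.toFun a.1}).exists_maximalFor id _
      ⟨⟨c, hc⟩, hca⟩
    refine ⟨x, hx, fun d hd => ?_⟩
    rcases le_total d x with h | h
    · exact h
    · exact hmax hd h
  choose m hm1 hm2 using hm
  have hφm : ∀ a, φ (m a) = a := by
    intro a
    have := (hadj (m a) a.1).1 (hm1 a)
    exact At.ext ((a.2.le_iff.1 this).resolve_left (φ (m a)).2.1)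
  refine ⟨φ, m, ?_, hφm, fun b => hm2 _ b (hφ b), ?_, hadj, hbot⟩
  · intro a a' haa
    have hlt := (f.map_lt _ _).1 ((at_lt A a a').1 haa)
    have hne : f.toFun a.1 ≠ f.toFun a'.1 := fun h => haa.ne (At.ext (f.inj h))
    obtain ⟨c, hc, h1, h2, h3⟩ := (hB.out.2.1.2.2 _ _ hne).1 hlt
    have hna : ¬ (m a).1 ≤ f.toFun a'.1 := by
      rw [hadj, hφm]
      intro h
      exact haa.ne (At.ext ((a'.2.le_iff.1 h).resolve_left a.2.1))
    have hc' := hm2 a' ⟨c, hc⟩ h1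
    refine lt_of_lt_of_le ?_ hc'
    rcases h3 (m a).1 (m a).2 (fun h => hna (h.1 (hm1 a))) with h | h
    · exact absurd (h ▸ hm1 a) h2
    · exact h
  · intro a
    apply SetLike.ext
    intro j
    rw [mem_lev, mem_lev, f.map_P]
    constructor
    · intro h
      refine mem_P_of_atoms B hB.out j (hB.out.1.2.1 j _ h _ bot_le) _ fun d hd => ?_
      exact lev_mono B (hm2 a d hd) h
    · intro h
      exact hB.out.1.2.1 j _ h _ (hm1 a)

/-- Cut of the atoms of the base determined by an element. -/
def cut {X Y : Type} [LinearOrder X] [LinearOrder Y] (m : X → Y) (hm : StrictMono m) (y : Y) :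
    LowerSet X where
  carrier := {a | m a ≤ y}
  lower' := fun _ _ hab ha => (hm.monotone hab).trans ha

theorem mem_cut {X Y : Type} [LinearOrder X] [LinearOrder Y] (m : X → Y) (hm : StrictMono m)
    (y : Y) (a : X) : a ∈ cut m hm y ↔ m a ≤ y := Iff.rfl

theorem cut_mono {X Y : Type} [LinearOrder X] [LinearOrder Y] (m : X → Y) (hm : StrictMono m) :
    Monotone (cut m hm) := fun _ _ h _ ha => le_trans ha h

theorem cut_m {X Y Z : Type} [LinearOrder X] [LinearOrder Y] [LinearOrder Z] (m : X → Y)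
    (hm : StrictMono m) (n : X → Z) (hn : StrictMono n) (a : X) :
    cut m hm (m a) = cut n hn (n a) := by
  apply SetLike.ext
  intro x
  rw [mem_cut, mem_cut, hm.le_iff_le, hn.le_iff_le]

theorem cut_lt {X Y : Type} [LinearOrder X] [LinearOrder Y] (m : X → Y)
    (hm : StrictMono m) (a : X) (y : Y) (h : y < m a) : cut m hm y < cut m hm (m a) := by
  refine lt_of_le_of_ne (cut_mono m hm h.le) fun e => ?_
  have : a ∈ cut m hm y := by rw [e]; exact le_refl (m a)
  exact absurd this (not_le.2 h)

/-- Amalgamation of finite linear orders with levels. -/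
theorem lin_amalg {L X Y Z : Type} [LinearOrder L] [LinearOrder X] [LinearOrder Y] [LinearOrder Z]
    [Fintype Y] [Fintype Z] (lx : X → L) (ly : Y → L) (lz : Z → L)
    (hly : Monotone ly) (hlz : Monotone lz)
    (φ : Y → X) (m : X → Y) (hm : StrictMono m) (hφ : ∀ a, φ (m a) = a) (hle : ∀ b, b ≤ m (φ b))
    (hl : ∀ a, ly (m a) = lx a)
    (ψ : Z → X) (n : X → Z) (hn : StrictMono n) (hψ : ∀ a, ψ (n a) = a) (hle' : ∀ c, c ≤ n (ψ c))
    (hl' : ∀ a, lz (n a) = lx a) :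
    ∃ (D : Type) (_ : LinearOrder D) (_ : Fintype D) (U : D → L)
      (ρ : D → Y) (i : Y → D) (σ : D → Z) (k : Z → D),
      Monotone U ∧ StrictMono i ∧ (∀ b, ρ (i b) = b) ∧ (∀ x, x ≤ i (ρ x)) ∧ (∀ b, U (i b) = ly b) ∧
      StrictMono k ∧ (∀ b, σ (k b) = b) ∧ (∀ x, x ≤ k (σ x)) ∧ (∀ b, U (k b) = lz b) ∧
      (∀ x, φ (ρ x) = ψ (σ x)) := by
  classical
  let D := Glue Y {c : Z // c ≠ n (ψ c)}
  let U : D → L := Glue.elim ly (fun c => lz c.1)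
  let key : D → L ×ₗ LowerSet X ×ₗ (Y ⊕ₗ Z) := Glue.elim
    (fun b => toLex (ly b, toLex (cut m hm b, toLex (Sum.inl b))))
    (fun c => toLex (lz c.1, toLex (cut n hn c.1, toLex (Sum.inr c.1))))
  have hkey : Function.Injective key := by
    rintro (b | c) (b' | c') h
    · have := congrArg (fun p => ofLex (ofLex (ofLex p).2).2) h
      simp [key, Glue.elim] at this
      rw [this]
    · have := congrArg (fun p => ofLex (ofLex (ofLex p).2).2) h
      simp [key, Glue.elim] at this
    · have := congrArg (fun p => ofLex (ofLex (ofLex p).2).2) h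
      simp [key, Glue.elim] at this
    · have := congrArg (fun p => ofLex (ofLex (ofLex p).2).2) h
      simp [key, Glue.elim] at this
      rw [Subtype.ext this]
  let ord : LinearOrder D := LinearOrder.lift' key hkey
  have hlt : ∀ x y : D, x < y ↔ key x < key y := fun _ _ => Iff.rfl
  have crit : ∀ x y : D, (ofLex (key x)).1 ≤ (ofLex (key y)).1 →
      (ofLex (ofLex (key x)).2).1 ≤ (ofLex (ofLex (key y)).2).1 →
      ((ofLex (ofLex (key x)).2).1 = (ofLex (ofLex (key y)).2).1 →
        (ofLex (ofLex (key x)).2).2 < (ofLex (ofLex (key y)).2).2) → x < y := by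
    intro x y h1 h2 h3
    rw [hlt, Prod.Lex.lt_iff]
    rcases h1.lt_or_eq with h | h
    · exact Or.inl h
    · refine Or.inr ⟨h, ?_⟩
      rw [Prod.Lex.lt_iff]
      rcases h2.lt_or_eq with h' | h'
      · exact Or.inl h'
      · exact Or.inr ⟨h', h3 h'⟩
  have hU : Monotone U := by
    have e : ∀ x, U x = (ofLex (key x)).1 := by rintro (b | c) <;> rfl
    intro x y hxy
    rw [e, e]
    rcases (Prod.Lex.le_iff.1 (show key x ≤ key y from hxy)) with h | h
    · exact h.le
    · exact h.1.le
  have hi : StrictMono (Glue.inl : Y → D) := by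
    intro b b' h
    exact crit _ _ (hly h.le) (cut_mono m hm h.le) fun _ => Sum.Lex.inl_lt_inl_iff.2 h
  let k : Z → D := fun c => if h : c = n (ψ c) then Glue.inl (m (ψ c)) else Glue.inr ⟨c, h⟩
  have k1 : ∀ a, k (n a) = Glue.inl (m a) := by
    intro a
    simp [k, hψ]
  have k2 : ∀ c (h : c ≠ n (ψ c)), k c = Glue.inr ⟨c, h⟩ := by
    intro c h
    simp [k, h]
  have hcases : ∀ c, (∃ a, c = n a) ∨ c ≠ n (ψ c) := fun c => by
    by_cases h : c = n (ψ c)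
    · exact Or.inl ⟨_, h⟩
    · exact Or.inr h
  have hmix : ∀ (a : X) (c : Z) (h : c ≠ n (ψ c)), c < n a → (Glue.inr ⟨c, h⟩ : D) < Glue.inl (m a) := by
    intro a c h hc
    have hcut : cut n hn c < cut m hm (m a) := by
      rw [cut_m m hm n hn]; exact cut_lt n hn a c hc
    refine crit _ _ ?_ hcut.le fun e => absurd e hcut.ne
    show lz c ≤ ly (m a)
    rw [hl, ← hl']
    exact hlz hc.le
  refine ⟨D, ord, Fintype.ofFinite _, U, Glue.elim id (fun c => m (ψ c.1)), Glue.inl,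
    Glue.elim (fun b => n (φ b)) (fun c => c.1), k, hU, hi, fun _ => rfl, ?_, fun _ => rfl,
    ?_, ?_, ?_, ?_, ?_⟩
  · rintro (b | c)
    · exact le_rfl
    · exact (hmix (ψ c.1) c.1 c.2 (lt_of_le_of_ne (hle' _) c.2)).le
  · intro c c' h
    rcases hcases c with ⟨a, rfl⟩ | hc <;> rcases hcases c' with ⟨a', rfl⟩ | hc'
    · rw [k1, k1]
      exact hi (hm (hn.lt_iff_lt.1 h))
    · rw [k1, k2 c' hc']
      refine crit _ _ ?_ ?_ fun _ => Sum.Lex.inl_lt_inr _ _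
      · show ly (m a) ≤ lz c'
        rw [hl, ← hl']
        exact hlz h.le
      · show cut m hm (m a) ≤ cut n hn c'
        rw [cut_m m hm n hn]
        exact cut_mono n hn h.le
    · rw [k1, k2 c hc]
      exact hmix a' c hc h
    · rw [k2 c hc, k2 c' hc']
      exact crit _ _ (hlz h.le) (cut_mono n hn h.le) fun _ => Sum.Lex.inr_lt_inr_iff.2 h
  · intro c
    rcases hcases c with ⟨a, rfl⟩ | hc
    · rw [k1]
      simp [hφ, Glue.elim]
    · rw [k2 c hc]
      rfl
  · rintro (b | c)
    · show _ ≤ k (n (φ b))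
      rw [k1]
      exact hi.monotone (hle b)
    · exact (k2 c.1 c.2).ge
  · intro c
    rcases hcases c with ⟨a, rfl⟩ | hc
    · rw [k1, hl', ← hl]
      rfl
    · rw [k2 c hc]
      rfl
  · rintro (b | c)
    · exact (hψ _).symm
    · exact hφ _

end NaAmalg

theorem naBJ_amalgamation {J : Type} [LinearOrder J]
    (A B C : OrdAlg J) (hA : A.InNaBJ) (hB : B.InNaBJ) (hC : C.InNaBJ)
    (f : OrdAlg.Emb A B) (g : OrdAlg.Emb A C) :
    ∃ D : OrdAlg J, D.InNaBJ ∧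
      ∃ (r : OrdAlg.Emb B D) (s : OrdAlg.Emb C D),
        r.toFun ∘ f.toFun = s.toFun ∘ g.toFun := by
  classical
  have : Fact A.InNaBJ := ⟨hA⟩
  have : Fact B.InNaBJ := ⟨hB⟩
  have : Fact C.InNaBJ := ⟨hC⟩
  obtain ⟨φ, m, hm, hφ, hle, hl, hadj, hb⟩ := NaAmalg.emb_data f
  obtain ⟨ψ, n, hn, hψ, hle', hl', hadj', hb'⟩ := NaAmalg.emb_data g
  obtain ⟨D, iD, fD, U, ρ, i, σ, k, hU, hi, hρ, hi', hUi, hk, hσ, hk', hUk, hcomm⟩ :=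
    NaAmalg.lin_amalg (NaAmalg.lev A) (NaAmalg.lev B) (NaAmalg.lev C) (NaAmalg.lev_mono B)
      (NaAmalg.lev_mono C) φ m hm hφ hle hl ψ n hn hψ hle' hl'
  let N : UpperSet J := ⟨{j | ⊥ ∈ A.P j}, fun _ _ hij hi => hA.1.2.2.2 _ _ hij hi⟩
  have hN1 : ∀ j, j ∈ N ↔ ⊥ ∈ B.P j := hb
  have hN2 : ∀ j, j ∈ N ↔ ⊥ ∈ C.P j := hb'
  obtain ⟨b0, hb0, hb0'⟩ := hB.2.2
  refine ⟨NaAmalg.setAlg D U N, NaAmalg.setAlg_in D U N hU (i ⟨b0, hb0⟩) ?_,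
    NaAmalg.mkEmb D U N B ρ i hi hρ hi' hU hUi hN1,
    NaAmalg.mkEmb D U N C σ k hk hσ hk' hU hUk hN2, ?_⟩
  · intro j
    rw [hUi]
    exact hb0' j
  · funext a
    apply Set.ext
    intro x
    show (ρ x).1 ≤ f.toFun a ↔ (σ x).1 ≤ g.toFun a
    rw [hadj, hadj', hcomm]
end

section
/- The class na(B_u) has the amalgamation property: if (A, <_A), (B, <_B), (C, <_C) are structures in na(B_u) and f : (A, <_A) → (B, <_B) and g : (A, <_A) → (C, <_C) are embeddings, then there exist a structure (D, <_D) in na(B_u) and embeddings r : (B, <_B) → (D, <_D) and s : (C, <_C) → (D, <_D) with r ∘ f = s ∘ g. -/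
/-- A finite Boolean algebra with one distinguished subset and a distinguished binary
relation (the linear ordering). -/
structure OrdAlgU : Type 1 where
  carrier : Type
  [ba : BooleanAlgebra carrier]
  [fin : Fintype carrier]
  P : Set carrier
  lt : carrier → carrier → Prop

attribute [instance] OrdAlgU.ba OrdAlgU.fin

namespace OrdAlgU

/-- The predicate is a (nontrivial) ideal. -/
def Ideal (A : OrdAlgU) : Prop :=
  (⊤ : A.carrier) ∉ A.P ∧
  (∀ x ∈ A.P, ∀ y : A.carrier, y ≤ x → y ∈ A.P) ∧
  (∀ x ∈ A.P, ∀ y ∈ A.P, x ⊔ y ∈ A.P)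

/-- The ordering is proper on atoms: every atom in `P` precedes every atom not in `P`. -/
def Proper (A : OrdAlgU) : Prop :=
  ∀ a b : A.carrier, IsAtom a → IsAtom b → a ∈ A.P → b ∉ A.P → A.lt a b

/-- The ordering is natural: a strict total (i.e. linear) order whose restriction to the
atoms is proper, and which is the antilexicographical extension of its restriction to atoms:
for distinct `a`, `b`, `a < b` iff the `<`-greatest atom lying below exactly one of `a`, `b`
lies below `b`. -/
def Natural (A : OrdAlgU) : Prop :=
  IsStrictTotalOrder A.carrier A.lt ∧ A.Proper ∧
  ∀ a b : A.carrier, a ≠ b →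
    (A.lt a b ↔ ∃ c : A.carrier, IsAtom c ∧ c ≤ b ∧ ¬ c ≤ a ∧
      ∀ d : A.carrier, IsAtom d → ¬ (d ≤ a ↔ d ≤ b) → d = c ∨ A.lt d c)

/-- Membership in the class `na(B_u)`: a naturally ordered finite Boolean algebra with an
ideal `P` such that exactly one atom does not belong to `P`. -/
def InNaBu (A : OrdAlgU) : Prop :=
  A.Ideal ∧ A.Natural ∧ ∃! a : A.carrier, IsAtom a ∧ a ∉ A.P

/-- An embedding: an injective map preserving `⊔`, `⊓`, `ᶜ`, `⊥`, `⊤`, the linear order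
and the predicate. -/
structure Emb (A B : OrdAlgU) : Type where
  toFun : A.carrier → B.carrier
  inj : Function.Injective toFun
  map_sup : ∀ x y : A.carrier, toFun (x ⊔ y) = toFun x ⊔ toFun y
  map_inf : ∀ x y : A.carrier, toFun (x ⊓ y) = toFun x ⊓ toFun y
  map_compl : ∀ x : A.carrier, toFun xᶜ = (toFun x)ᶜ
  map_bot : toFun ⊥ = ⊥
  map_top : toFun ⊤ = ⊤
  map_lt : ∀ x y : A.carrier, A.lt x y ↔ B.lt (toFun x) (toFun y)
  map_P : ∀ x : A.carrier, x ∈ A.P ↔ toFun x ∈ B.P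

/-- The copies of `A` in `C`: images of embeddings of `A` into `C`. -/
def Copies (A C : OrdAlgU) : Set (Set C.carrier) :=
  {S | ∃ e : Emb A C, Set.range e.toFun = S}

end OrdAlgU

namespace OrdAlgU

theorem atom_le_compl {α : Type} [BooleanAlgebra α] {b : α} (hb : IsAtom b) (x : α) :
    b ≤ xᶜ ↔ ¬ b ≤ x := by
  constructor
  · intro h h'
    have : b ≤ x ⊓ xᶜ := le_inf h' h
    rw [inf_compl_eq_bot, le_bot_iff] at this
    exact hb.1 this
  · intro h
    rw [le_compl_iff_disjoint_right]
    rw [disjoint_iff]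
    exact (hb.le_iff.1 inf_le_left).resolve_right (fun e => h (inf_eq_left.1 e))

theorem atom_le_sup {α : Type} [BooleanAlgebra α] {b : α} (hb : IsAtom b) (x y : α) :
    b ≤ x ⊔ y ↔ b ≤ x ∨ b ≤ y := by
  constructor
  · intro h
    by_contra hc
    push Not at hc
    have h1 := (atom_le_compl hb x).2 hc.1
    have h2 := (atom_le_compl hb y).2 hc.2
    have h3 : b ≤ (x ⊔ y)ᶜ := by rw [compl_sup]; exact le_inf h1 h2
    exact (atom_le_compl hb _).1 h3 h
  · rintro (h | h)
    · exact le_sup_of_le_left h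
    · exact le_sup_of_le_right h

/-- The atoms of an algebra. -/
@[ext] structure At (A : OrdAlgU) : Type where
  val : A.carrier
  property : IsAtom val

instance (A : OrdAlgU) : Finite (At A) :=
  Finite.of_injective At.val (fun _ _ h => At.ext h)

/-- The linear order on atoms. -/
@[reducible] noncomputable def atLO (A : OrdAlgU) (h : IsStrictTotalOrder A.carrier A.lt) :
    LinearOrder (At A) := by
  classical
  haveI := h
  haveI : IsStrictTotalOrder (At A) (fun a b => A.lt a.1 b.1) :=
    { irrefl := fun a => irrefl_of A.lt a.1
      trans := fun a b c => trans_of A.lt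
      trichotomous := fun a b h1 h2 => At.ext (Std.Trichotomous.trichotomous (r := A.lt) a.1 b.1 h1 h2) }
  exact linearOrderOfSTO (fun a b : At A => A.lt a.1 b.1)

/-- Non-disjoint union carrier for the amalgam of linear orders. -/
inductive Am (X Y : Type) : Type
  | l (x : X) : Am X Y
  | r (y : Y) : Am X Y

/-- the partial order of the amalgam -/
def amLe {X Y Z : Type} [LinearOrder X] [LinearOrder Y] (m : Z → X) (n : Z → Y) :
    Am X Y → Am X Y → Prop
  | .l x, .l x' => x ≤ x'
  | .r y, .r y' => y ≤ y'
  | .l x, .r y => ∃ z, x ≤ m z ∧ n z ≤ y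
  | .r y, .l x => ∃ z, y ≤ n z ∧ m z < x

theorem amLe_po {X Y Z : Type} [LinearOrder X] [LinearOrder Y] [LinearOrder Z]
    (m : Z → X) (n : Z → Y) (hm : StrictMono m) (hn : StrictMono n) :
    IsPartialOrder (Am X Y) (amLe m n) where
  refl a := by cases a <;> simp [amLe]
  trans a b c := by
    rcases a with x | y <;> rcases b with x' | y' <;> rcases c with x'' | y'' <;> simp only [amLe]
    · exact le_trans
    · rintro h ⟨z, h1, h2⟩; exact ⟨z, h.trans h1, h2⟩
    · rintro ⟨z, h1, h2⟩ ⟨z', h3, h4⟩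
      have := hm.monotone (hn.le_iff_le.1 (h2.trans h3))
      exact (h1.trans this).trans h4.le
    · rintro ⟨z, h1, h2⟩ h; exact ⟨z, h1, h2.trans h⟩
    · rintro ⟨z, h1, h2⟩ h; exact ⟨z, h1, h2.trans_le h⟩
    · rintro ⟨z, h1, h2⟩ ⟨z', h3, h4⟩
      have := hn.monotone (hm.lt_iff_lt.1 (h2.trans_le h3)).le
      exact (h1.trans this).trans h4
    · rintro h ⟨z, h1, h2⟩; exact ⟨z, h.trans h1, h2⟩
    · exact le_trans
  antisymm a b := by
    rcases a with x | y <;> rcases b with x' | y' <;> simp only [amLe]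
    · intro h h'; rw [le_antisymm h h']
    · rintro ⟨z, h1, h2⟩ ⟨z', h3, h4⟩
      have := hm.monotone (hn.le_iff_le.1 (h2.trans h3))
      exact absurd ((h1.trans this).trans_lt h4) (lt_irrefl _)
    · rintro ⟨z', h3, h4⟩ ⟨z, h1, h2⟩
      have := hm.monotone (hn.le_iff_le.1 (h2.trans h3))
      exact absurd ((h1.trans this).trans_lt h4) (lt_irrefl _)
    · intro h h'; rw [le_antisymm h h']

theorem lo_amalg {X Y Z : Type} [LinearOrder X] [LinearOrder Y] [LinearOrder Z]
    [Finite X] [Finite Y]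
    (φ : X → Z) (m : Z → X) (hm : StrictMono m) (hφ : ∀ z, φ (m z) = z) (hφm : ∀ x, x ≤ m (φ x))
    (ψ : Y → Z) (n : Z → Y) (hn : StrictMono n) (hψ : ∀ z, ψ (n z) = z) (hψn : ∀ x, x ≤ n (ψ x)) :
    ∃ (W : Type) (_ : LinearOrder W) (_ : Finite W) (p : W → X) (q : X → W) (p' : W → Y)
      (q' : Y → W), StrictMono q ∧ (∀ x, p (q x) = x) ∧ (∀ w, w ≤ q (p w)) ∧
      StrictMono q' ∧ (∀ x, p' (q' x) = x) ∧ (∀ w, w ≤ q' (p' w)) ∧ ∀ w, φ (p w) = ψ (p' w) := by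
  classical
  haveI := amLe_po m n hm hn
  obtain ⟨s, hs, hrs⟩ := extend_partialOrder (amLe m n)
  letI LO : LinearOrder (Am X Y) :=
    { le := s
      le_refl := fun a => refl_of s a
      le_trans := fun a b c => trans_of s
      le_antisymm := fun a b => antisymm_of s
      le_total := fun a b => total_of s a b
      toDecidableLE := Classical.decRel _ }
  have key : ∀ a b : Am X Y, amLe m n a b → a ≤ b := fun a b h => hrs a b h
  have hfin : Finite (Am X Y) := Finite.of_surjective
    (fun u : X ⊕ Y => Sum.casesOn (motive := fun _ => Am X Y) u Am.l Am.r) (by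
      rintro (x | y)
      · exact ⟨Sum.inl x, rfl⟩
      · exact ⟨Sum.inr y, rfl⟩)
  let p : Am X Y → X := fun w => match w with | .l x => x | .r y => m (ψ y)
  let p' : Am X Y → Y := fun w => match w with | .l x => n (φ x) | .r y => y
  let q : X → Am X Y := fun x => if x = m (φ x) then .r (n (φ x)) else .l x
  have hpq : ∀ x, p (q x) = x := by
    intro x
    by_cases h : x = m (φ x)
    · simp only [q, if_pos h, p, hψ, ← h]
    · simp only [q, if_neg h, p]
  refine ⟨Am X Y, LO, hfin, p, q, p', Am.r, ?_, hpq, ?_, ?_, fun _ => rfl, ?_, ?_⟩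
  · intro x x' hx
    refine lt_of_le_of_ne (key _ _ ?_) (fun h => hx.ne (by rw [← hpq x, h, hpq]))
    by_cases h : x = m (φ x) <;> by_cases h' : x' = m (φ x')
    · simp only [q, if_pos h, if_pos h', amLe]
      rw [h, h'] at hx
      exact hn.monotone (hm.lt_iff_lt.1 hx).le
    · simp only [q, if_pos h, if_neg h', amLe]
      exact ⟨φ x, le_rfl, h ▸ hx⟩
    · simp only [q, if_neg h, if_pos h', amLe]
      exact ⟨φ x', hx.le.trans h'.le, le_rfl⟩
    · simp only [q, if_neg h, if_neg h', amLe]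
      exact hx.le
  · rintro (x | y)
    · by_cases h : x = m (φ x)
      · simp only [p, q, if_pos h]
        exact key _ _ ⟨φ x, h.le, le_rfl⟩
      · simp only [p, q, if_neg h]
        exact le_rfl
    · have : q (p (.r y)) = .r (n (ψ y)) := by simp [p, q, hφ]
      rw [this]
      exact key _ _ (hψn y)
  · intro y y' h
    exact lt_of_le_of_ne (key _ _ h.le) (fun e => h.ne (by injection e))
  · rintro (x | y)
    · exact key _ _ ⟨φ x, hφm x, le_rfl⟩
    · exact le_rfl
  · rintro (x | y)
    · simp [p, p', hψ]
    · simp [p, p', hφ]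

theorem Emb.mono {A B : OrdAlgU} (f : Emb A B) {x y : A.carrier} (h : x ≤ y) :
    f.toFun x ≤ f.toFun y := by
  rw [← inf_eq_left, ← f.map_inf, inf_eq_left.2 h]

theorem Emb.dual {A B : OrdAlgU} (f : Emb A B) {b : B.carrier} (hb : IsAtom b) :
    ∃ a : A.carrier, IsAtom a ∧ ∀ x, b ≤ f.toFun x ↔ a ≤ x := by
  obtain ⟨a, ha⟩ := exists_minimal_of_wellFoundedLT (fun x => b ≤ f.toFun x)
    ⟨⊤, by simp [f.map_top]⟩
  have h1 : ∀ x, b ≤ f.toFun x → a ≤ x := by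
    intro x hx
    have : b ≤ f.toFun (a ⊓ x) := by rw [f.map_inf]; exact le_inf ha.1 hx
    exact (ha.2 this inf_le_left).trans inf_le_right
  refine ⟨a, ⟨?_, ?_⟩, fun x => ⟨h1 x, fun h => ha.1.trans (f.mono h)⟩⟩
  · rintro rfl
    have : b ≤ f.toFun ⊥ := ha.1
    rw [f.map_bot, le_bot_iff] at this
    exact hb.1 this
  · intro y hy
    have h2 : ¬ b ≤ f.toFun y := fun h => hy.not_ge (h1 y h)
    have h3 : b ≤ f.toFun yᶜ := by rw [f.map_compl]; exact (atom_le_compl hb _).2 h2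
    have h4 : y ≤ y ⊓ yᶜ := le_inf le_rfl (hy.le.trans (h1 _ h3))
    simpa using h4

theorem Emb.exists_dual {A B : OrdAlgU} (hA : IsStrictTotalOrder A.carrier A.lt) (hB : B.Natural)
    (f : Emb A B) :
    letI := A.atLO hA
    letI := B.atLO hB.1
    ∃ (φ : At B → At A) (m : At A → At B), StrictMono m ∧ (∀ z, φ (m z) = z) ∧
      (∀ x, x ≤ m (φ x)) ∧ ∀ (b : At B) (x : A.carrier), b.1 ≤ f.toFun x ↔ (φ b).1 ≤ x := by
  letI := A.atLO hA
  letI := B.atLO hB.1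
  have h0 : ∀ b : At B, ∃ a : At A, ∀ x, b.1 ≤ f.toFun x ↔ a.1 ≤ x := by
    intro b
    obtain ⟨a, ha, h⟩ := f.dual b.2
    exact ⟨⟨a, ha⟩, h⟩
  choose φ hφ using h0
  have h1 : ∀ a : At A, ∃ b : At B, b.1 ≤ f.toFun a.1 ∧ ∀ d : At B, d.1 ≤ f.toFun a.1 → d ≤ b := by
    intro a
    have hne : f.toFun a.1 ≠ ⊥ := fun h => a.2.1 (f.inj (h.trans f.map_bot.symm))
    obtain ⟨c, hc, hca⟩ := (IsAtomic.eq_bot_or_exists_atom_le (f.toFun a.1)).resolve_left hne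
    obtain ⟨b, hb⟩ := (Set.toFinite {d : At B | d.1 ≤ f.toFun a.1}).exists_maximal ⟨⟨c, hc⟩, hca⟩
    exact ⟨b, hb.1, fun d hd => (le_total d b).elim id (fun h => hb.2 hd h)⟩
  choose m hm1 hm2 using h1
  have hφm : ∀ z, φ (m z) = z := by
    intro z
    have := (hφ (m z) z.1).1 (hm1 z)
    exact At.ext ((z.2.le_iff.1 this).resolve_left (φ (m z)).2.1)
  refine ⟨φ, m, ?_, hφm, ?_, hφ⟩
  · intro a a' haa
    have hlt : B.lt (f.toFun a.1) (f.toFun a'.1) := (f.map_lt _ _).1 haa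
    haveI := hB.1
    have hne : f.toFun a.1 ≠ f.toFun a'.1 := fun h => by
      rw [h] at hlt; exact irrefl_of B.lt _ hlt
    obtain ⟨c, hc, hc1, hc2, hc3⟩ := (hB.2.2 _ _ hne).1 hlt
    have hnm : ¬ (m a).1 ≤ f.toFun a'.1 := by
      rw [hφ, hφm]
      intro h
      exact haa.ne (At.ext ((a'.2.le_iff.1 h).resolve_left a.2.1))
    have h5 : (⟨c, hc⟩ : At B) ≤ m a' := hm2 _ _ hc1
    refine lt_of_lt_of_le ?_ h5
    rcases hc3 (m a).1 (m a).2 (fun h => hnm (h.1 (hm1 a))) with h | h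
    · exact absurd (h ▸ hc1) hnm
    · exact h
  · intro x
    exact hm2 _ _ ((hφ _ _).2 le_rfl)

theorem mem_P_iff {A : OrdAlgU} (hA : A.InNaBu) (hbot : (⊥ : A.carrier) ∈ A.P) {t : A.carrier}
    (ht : IsAtom t ∧ t ∉ A.P) (x : A.carrier) : x ∈ A.P ↔ ¬ t ≤ x := by
  constructor
  · intro hx h
    exact ht.2 (hA.1.2.1 x hx t h)
  · intro h
    by_contra hx
    obtain ⟨a, ha⟩ := exists_minimal_of_wellFoundedLT (fun y => y ≤ x ∧ y ∉ A.P) ⟨x, le_rfl, hx⟩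
    have hat : IsAtom a := by
      refine ⟨fun h => ha.1.2 (h ▸ hbot), fun y hy => ?_⟩
      have hyP : y ∈ A.P := by
        by_contra hyP
        exact hy.not_ge (ha.2 ⟨hy.le.trans ha.1.1, hyP⟩ hy.le)
      have h2 : a \ y ∉ A.P := by
        intro h2
        apply ha.1.2
        have := hA.1.2.2 _ h2 _ hyP
        rwa [sdiff_sup_cancel hy.le] at this
      have h3 := ha.2 ⟨sdiff_le.trans ha.1.1, h2⟩ sdiff_le
      have h4 : Disjoint y y := (disjoint_sdiff_self_right (x := y) (y := a)).mono_right (hy.le.trans h3)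
      exact disjoint_self.1 h4
    obtain ⟨u, -, hu⟩ := hA.2.2
    have : t = a := (hu t ht).trans (hu a ⟨hat, ha.1.2⟩).symm
    exact h (this ▸ ha.1.1)

/-- The algebra of finite subsets of a finite linear order. -/
noncomputable def pow (W : Type) [LinearOrder W] [Fintype W] (t : W) : OrdAlgU where
  carrier := Finset W
  P := {s | t ∉ s}
  lt s u := toColex s < toColex u

theorem finset_isAtom {W : Type} [DecidableEq W] [Fintype W] (s : Finset W) :
    IsAtom s ↔ ∃ w, s = {w} := by
  constructor
  · intro h
    obtain ⟨w, hw⟩ := Finset.nonempty_iff_ne_empty.2 h.1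
    refine ⟨w, ?_⟩
    have : ({w} : Finset W) ≤ s := by simpa using hw
    exact ((h.le_iff.1 this).resolve_left (Finset.singleton_ne_empty w)).symm
  · rintro ⟨w, rfl⟩
    refine ⟨Finset.singleton_ne_empty w, fun b hb => ?_⟩
    exact Finset.ssubset_singleton_iff.1 hb

theorem pow_inNaBu (W : Type) [LinearOrder W] [Fintype W] (t : W) (ht : ∀ w, w ≤ t) :
    (pow W t).InNaBu := by
  refine ⟨⟨?_, ?_, ?_⟩, ⟨?_, ?_, ?_⟩, ?_⟩
  · intro h
    exact h (Finset.mem_univ t)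
  · intro x hx y hy h
    exact hx (hy h)
  · intro x hx y hy h
    exact (Finset.mem_union.1 h).elim hx hy
  · exact
    { irrefl := fun a => lt_irrefl (toColex (α := Finset W) a)
      trans := fun a b c h h' => lt_trans (α := Colex (Finset W)) h h'
      trichotomous := fun a b h1 h2 =>
        toColex.injective (le_antisymm (α := Colex (Finset W))
          (not_lt (α := Colex (Finset W)).1 h2) (not_lt (α := Colex (Finset W)).1 h1)) }
  · intro a b ha hb haP hbP
    obtain ⟨i, rfl⟩ := (finset_isAtom (W := W) a).1 ha
    obtain ⟨j, rfl⟩ := (finset_isAtom (W := W) b).1 hb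
    have h1 : t ≠ i := fun h => haP (Finset.mem_singleton.2 h)
    have h2 : t = j := by
      by_contra h
      exact hbP (fun h' => h (Finset.mem_singleton.1 h'))
    exact Finset.Colex.singleton_lt_singleton.2 (h2 ▸ lt_of_le_of_ne (ht i) h1.symm)
  · intro (a : Finset W) (b : Finset W) hab
    change toColex a < toColex b ↔ ∃ c : Finset W, IsAtom c ∧ c ⊆ b ∧ ¬ c ⊆ a ∧
      ∀ d : Finset W, IsAtom d → ¬ (d ⊆ a ↔ d ⊆ b) → d = c ∨ toColex d < toColex c
    rw [Finset.Colex.toColex_lt_toColex_iff_exists_forall_lt]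
    constructor
    · rintro ⟨i0, hi0, hi0', hi1⟩
      obtain ⟨i, hi⟩ := (Set.toFinite {i : W | i ∈ b ∧ i ∉ a}).exists_maximal ⟨i0, hi0, hi0'⟩
      refine ⟨{i}, (finset_isAtom _).2 ⟨i, rfl⟩, by simpa using hi.1.1, by simpa using hi.1.2, ?_⟩
      intro d hd hdab
      obtain ⟨j, rfl⟩ := (finset_isAtom d).1 hd
      simp only [Finset.singleton_subset_iff] at hdab
      rw [Finset.Colex.singleton_lt_singleton, Finset.singleton_inj, ← le_iff_eq_or_lt]
      by_cases hj : j ∈ b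
      · have hja : j ∉ a := by tauto
        exact (le_total j i).elim id (fun h => hi.2 ⟨hj, hja⟩ h)
      · have hja : j ∈ a := by tauto
        refine (hi1 j hja hj).le.trans ?_
        exact (le_total i0 i).elim id (fun h => hi.2 ⟨hi0, hi0'⟩ h)
    · rintro ⟨c, hc, hcb, hca, h⟩
      obtain ⟨i, rfl⟩ := (finset_isAtom c).1 hc
      simp only [Finset.singleton_subset_iff] at hcb hca
      refine ⟨i, hcb, hca, fun j hja hjb => ?_⟩
      have := h {j} ((finset_isAtom _).2 ⟨j, rfl⟩) (by simp [hja, hjb])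
      rw [Finset.Colex.singleton_lt_singleton, Finset.singleton_inj] at this
      rcases this with rfl | h
      · exact absurd hja hca
      · exact h
  · refine ⟨({t} : Finset W), ⟨(finset_isAtom (W := W) _).2 ⟨t, rfl⟩, fun h => h (Finset.mem_singleton_self t)⟩, ?_⟩
    rintro a ⟨ha, haP⟩
    obtain ⟨i, rfl⟩ := (finset_isAtom (W := W) a).1 ha
    have h2 : t = i := by
      by_contra h
      exact haP (fun h' => h (Finset.mem_singleton.1 h'))
    rw [h2]

theorem exists_emb {B : OrdAlgU} (hB : B.InNaBu) (hbot : (⊥ : B.carrier) ∈ B.P)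
    (W : Type) [LinearOrder W] [Fintype W] (t : W) (ht : ∀ w, w ≤ t) :
    letI := B.atLO hB.2.1.1
    ∀ (p : W → At B) (q : At B → W), StrictMono q → (∀ x, p (q x) = x) → (∀ w, w ≤ q (p w)) →
    ∃ r : Emb B (pow W t), ∀ (b : B.carrier) (w : W),
      w ∈ (show Finset W from r.toFun b) ↔ (p w).1 ≤ b := by
  classical
  letI := B.atLO hB.2.1.1
  haveI := hB.2.1.1
  intro p q hq hpq hqp
  let F : B.carrier → Finset W := fun b => Finset.univ.filter (fun w => (p w).1 ≤ b)
  have hF : ∀ b w, w ∈ F b ↔ (p w).1 ≤ b := by simp [F]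
  have hinj : Function.Injective F := by
    intro x y h
    refine BooleanAlgebra.eq_iff_atom_le_iff.2 fun a ha => ?_
    have := hF x (q ⟨a, ha⟩)
    rw [h, hF, hpq] at this
    exact this.symm
  have hlt : ∀ x y, B.lt x y → toColex (F x) < toColex (F y) := by
    intro x y hxy
    have hne : x ≠ y := fun h => by
      rw [h] at hxy; exact irrefl_of B.lt _ hxy
    obtain ⟨c, hc, hc1, hc2, hc3⟩ := (hB.2.1.2.2 _ _ hne).1 hxy
    rw [Finset.Colex.toColex_lt_toColex_iff_exists_forall_lt]
    refine ⟨q ⟨c, hc⟩, by rwa [hF, hpq], by rwa [hF, hpq], fun w hw hw' => ?_⟩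
    rw [hF] at hw hw'
    rcases hc3 (p w).1 (p w).2 (fun h => hw' (h.1 hw)) with h | h
    · exact absurd (h ▸ hc1) hw'
    · exact (hqp w).trans_lt (hq (show p w < ⟨c, hc⟩ from h))
  obtain ⟨u, hu, -⟩ := id hB.2.2
  have hpt : (p t).1 = u := by
    by_contra hne
    have hP : (p t).1 ∈ B.P := by
      rw [mem_P_iff hB hbot hu]
      intro h
      exact hne (((p t).2.le_iff.1 h).resolve_left hu.1.1).symm
    have h1 : p t < ⟨u, hu.1⟩ := hB.2.1.2.1 _ _ (p t).2 hu.1 hP hu.2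
    exact absurd ((hqp t).trans_lt (hq h1)) (ht _).not_gt
  refine ⟨⟨F, hinj, ?_, ?_, ?_, ?_, ?_, ?_, ?_⟩, hF⟩
  · intro x y
    refine Finset.ext fun w => ?_
    rw [hF, atom_le_sup (p w).2]
    exact (or_congr (hF x w) (hF y w)).symm.trans Finset.mem_union.symm
  · intro x y
    refine Finset.ext fun w => ?_
    rw [hF, le_inf_iff]
    exact (and_congr (hF x w) (hF y w)).symm.trans Finset.mem_inter.symm
  · intro x
    refine Finset.ext fun w => ?_
    rw [hF, atom_le_compl (p w).2]
    exact (not_congr (hF x w)).symm.trans Finset.mem_compl.symm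
  · refine Finset.ext fun w => ?_
    rw [hF, le_bot_iff]
    exact iff_of_false (p w).2.1 (Finset.notMem_empty w)
  · refine Finset.ext fun w => ?_
    rw [hF]
    exact iff_of_true le_top (Finset.mem_univ w)
  · intro x y
    refine ⟨hlt x y, fun h => ?_⟩
    rcases trichotomous_of B.lt x y with h1 | h1 | h1
    · exact h1
    · subst h1
      exact absurd h (lt_irrefl (toColex (F x)))
    · exact absurd (lt_trans (α := Colex (Finset W)) h (hlt _ _ h1)) (lt_irrefl (toColex (F x)))
  · intro x
    rw [mem_P_iff hB hbot hu, ← hpt, ← hF]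
    rfl

theorem degenerate {B : OrdAlgU} (hB : B.InNaBu) (hbot : (⊥ : B.carrier) ∉ B.P) (x : B.carrier) :
    x = ⊥ ∨ x = ⊤ := by
  obtain ⟨u, hu, huu⟩ := id hB.2.2
  have h : ∀ y : B.carrier, y = ⊥ ∨ u ≤ y := by
    intro y
    rcases IsAtomic.eq_bot_or_exists_atom_le y with h | ⟨a, ha, hay⟩
    · exact Or.inl h
    · right
      rwa [← huu a ⟨ha, fun h => hbot (hB.1.2.1 a h ⊥ bot_le)⟩]
  rcases h x with h1 | h1
  · exact Or.inl h1
  · rcases h xᶜ with h2 | h2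
    · exact Or.inr (compl_eq_bot.1 h2)
    · exact absurd h1 ((atom_le_compl hu.1 _).1 h2)

end OrdAlgU


/-!
STATEMENT 5: The class na(B_u) has the amalgamation property.
-/

theorem naBu_amalgamation
    (A B C : OrdAlgU) (hA : A.InNaBu) (hB : B.InNaBu) (hC : C.InNaBu)
    (f : OrdAlgU.Emb A B) (g : OrdAlgU.Emb A C) :
    ∃ D : OrdAlgU, D.InNaBu ∧
      ∃ (r : OrdAlgU.Emb B D) (s : OrdAlgU.Emb C D),
        r.toFun ∘ f.toFun = s.toFun ∘ g.toFun := by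
  classical
  by_cases hbot : (⊥ : A.carrier) ∈ A.P
  · have hbB : (⊥ : B.carrier) ∈ B.P := by rw [← f.map_bot, ← f.map_P]; exact hbot
    have hbC : (⊥ : C.carrier) ∈ C.P := by rw [← g.map_bot, ← g.map_P]; exact hbot
    letI := A.atLO hA.2.1.1
    letI := B.atLO hB.2.1.1
    letI := C.atLO hC.2.1.1
    obtain ⟨φ, m, hm, hφ, hφm, hf⟩ := f.exists_dual hA.2.1.1 hB.2.1
    obtain ⟨ψ, n, hn, hψ, hψn, hg⟩ := g.exists_dual hA.2.1.1 hC.2.1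
    obtain ⟨W, _, _, p, q, p', q', h1, h2, h3, h4, h5, h6, h7⟩ :=
      OrdAlgU.lo_amalg φ m hm hφ hφm ψ n hn hψ hψn
    letI := Fintype.ofFinite W
    obtain ⟨u, hu, -⟩ := id hB.2.2
    haveI : Nonempty W := ⟨q ⟨u, hu.1⟩⟩
    obtain ⟨t, ht⟩ := Finite.exists_max (id : W → W)
    obtain ⟨r, hr⟩ := OrdAlgU.exists_emb hB hbB W t ht p q h1 h2 h3
    obtain ⟨s, hs⟩ := OrdAlgU.exists_emb hC hbC W t ht p' q' h4 h5 h6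
    refine ⟨OrdAlgU.pow W t, OrdAlgU.pow_inNaBu W t ht, r, s, funext fun a => ?_⟩
    refine Finset.ext fun w => ?_
    refine (hr (f.toFun a) w).trans (Iff.trans ?_ (hs (g.toFun a) w).symm)
    rw [hf, hg, h7]
  · have hbB : (⊥ : B.carrier) ∉ B.P := by rw [← f.map_bot, ← f.map_P]; exact hbot
    have hsurj : ∀ b, ∃ a, f.toFun a = b := by
      intro b
      rcases OrdAlgU.degenerate hB hbB b with rfl | rfl
      · exact ⟨⊥, f.map_bot⟩
      · exact ⟨⊤, f.map_top⟩
    choose k hk using hsurj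
    have hk' : ∀ a, k (f.toFun a) = a := fun a => f.inj (hk _)
    refine ⟨C, hC, ⟨g.toFun ∘ k, ?_, ?_, ?_, ?_, ?_, ?_, ?_, ?_⟩,
      ⟨id, Function.injective_id, fun _ _ => rfl, fun _ _ => rfl, fun _ => rfl, rfl, rfl,
        fun _ _ => Iff.rfl, fun _ => Iff.rfl⟩, ?_⟩
    · exact g.inj.comp (Function.LeftInverse.injective hk)
    · intro x y
      simp only [Function.comp]
      rw [← g.map_sup]; congr 1; apply f.inj; rw [f.map_sup, hk, hk, hk]
    · intro x y
      simp only [Function.comp]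
      rw [← g.map_inf]; congr 1; apply f.inj; rw [f.map_inf, hk, hk, hk]
    · intro x
      simp only [Function.comp]
      rw [← g.map_compl]; congr 1; apply f.inj; rw [f.map_compl, hk, hk]
    · simp only [Function.comp]
      rw [← g.map_bot]; congr 1; apply f.inj; rw [f.map_bot, hk]
    · simp only [Function.comp]
      rw [← g.map_top]; congr 1; apply f.inj; rw [f.map_top, hk]
    · intro x y
      simp only [Function.comp]
      rw [← g.map_lt, f.map_lt, hk, hk]
    · intro x
      simp only [Function.comp]
      rw [← g.map_P, f.map_P, hk]
    · funext a
      simp [hk']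
end

section
/- The class na(B_J^u) has the amalgamation property: if (A, <_A), (B, <_B), (C, <_C) are structures in na(B_J^u) and f : (A, <_A) → (B, <_B) and g : (A, <_A) → (C, <_C) are embeddings, then there exist a structure (D, <_D) in na(B_J^u) and embeddings r : (B, <_B) → (D, <_D) and s : (C, <_C) → (D, <_D) with r ∘ f = s ∘ g. -/
/-!
STATEMENT 6: The class na(B_J^u) has the amalgamation property.
-/

open Classical in
/-- Existence of the lower adjoint of a section. -/
theorem exists_adj {X Y : Type} [LinearOrder X] [Finite X] [LinearOrder Y]
    (m : X → Y) (hm : StrictMono m) (hle : ∀ y, ∃ x, y ≤ m x) :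
    ∃ i : Y → X, ∀ y x, i y ≤ x ↔ y ≤ m x := by
  have h : ∀ y, ∃ x0, ∀ x, x0 ≤ x ↔ y ≤ m x := by
    intro y
    obtain ⟨x0, h0⟩ := (Set.toFinite {x | y ≤ m x}).exists_minimal (hle y)
    refine ⟨x0, fun x => ⟨fun h => le_trans h0.1 (hm.monotone h), fun h => ?_⟩⟩
    by_contra hx
    push Not at hx
    exact absurd (h0.2 h hx.le) (not_le.2 hx)
  choose i hi using h
  exact ⟨i, hi⟩

/-- The dual notion of an embedding. -/
structure GoodMap {L X Y : Type} [LinearOrder X] [LinearOrder Y] (UX : X → L) (UY : Y → L)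
    (φ : Y → X) (m : X → Y) : Prop where
  sec : ∀ x, φ (m x) = x
  le : ∀ y, y ≤ m (φ y)
  mono : StrictMono m
  lab : ∀ x, UY (m x) = UX x

/-- The underlying set of the dual amalgam. -/
def AmD {X Y : Type} (Z : Type) (φ : Y → X) (m : X → Y) : Type :=
  {d : Y ⊕ Z // ∀ y, d = Sum.inl y → y ≠ m (φ y)}

/-- Dual amalgamation. -/
theorem dual_amalg {L X Y Z : Type} [LinearOrder L] [OrderTop L]
    [LinearOrder X] [Finite X] [LinearOrder Y] [Finite Y] [LinearOrder Z] [Finite Z]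
    (UX : X → L) (UY : Y → L) (UZ : Z → L) (hUY : Monotone UY) (hUZ : Monotone UZ)
    (hX : ∃ x, UX x = ⊤) (hY : ∃! y, UY y = ⊤) (hZ : ∃! z, UZ z = ⊤)
    (φ : Y → X) (m : X → Y) (ψ : Z → X) (n : X → Z)
    (hφ : GoodMap UX UY φ m) (hψ : GoodMap UX UZ ψ n) :
    ∃ (D : Type) (_ : LinearOrder D) (_ : Finite D) (UD : D → L) (ρ : D → Y) (r : Y → D)
      (σ : D → Z) (s : Z → D),
      Monotone UD ∧ (∃! d, UD d = ⊤) ∧ (∀ d, UD d ∈ Set.range UY ∪ Set.range UZ) ∧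
      GoodMap UY UD ρ r ∧ GoodMap UZ UD σ s ∧
      ∀ d, φ (ρ d) = ψ (σ d) := by
  obtain ⟨i, hi⟩ := exists_adj m hφ.mono (fun y => ⟨_, hφ.le y⟩)
  obtain ⟨k, hk⟩ := exists_adj n hψ.mono (fun y => ⟨_, hψ.le y⟩)
  let idx : AmD Z φ m → X := fun d => Sum.elim i k d.1
  let lab : AmD Z φ m → L := fun d => Sum.elim UY UZ d.1
  let key : AmD Z φ m → X ×ₗ (L ×ₗ (Y ⊕ₗ Z)) := fun d => toLex (idx d, toLex (lab d, toLex d.1))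
  have key_inj : Function.Injective key := by
    intro d d' h
    simp only [key, EmbeddingLike.apply_eq_iff_eq, Prod.mk.injEq] at h
    exact Subtype.ext h.2.2
  let lo : LinearOrder (AmD Z φ m) := LinearOrder.lift' key key_inj
  have hlt : ∀ d d' : AmD Z φ m, d < d' ↔ idx d < idx d' ∨ idx d = idx d' ∧
      (lab d < lab d' ∨ lab d = lab d' ∧ toLex d.1 < toLex d'.1) := by
    intro d d'
    change key d < key d' ↔ _
    simp only [key, Prod.Lex.toLex_lt_toLex]
  have hfin : Finite (AmD Z φ m) := Subtype.finite
  have imono : Monotone i := fun y y' h => (hi _ _).2 (h.trans ((hi _ _).1 le_rfl))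
  have kmono : Monotone k := fun y y' h => (hk _ _).2 (h.trans ((hk _ _).1 le_rfl))
  have hkn : ∀ x, k (n x) = x := fun x => le_antisymm ((hk _ _).2 le_rfl)
    (hψ.mono.le_iff_le.1 ((hk _ _).1 le_rfl))
  let inl : (y : Y) → y ≠ m (φ y) → AmD Z φ m := fun y hy =>
    ⟨Sum.inl y, fun y' h => by cases h; exact hy⟩
  let inr : Z → AmD Z φ m := fun z => ⟨Sum.inr z, fun y' h => by cases h⟩
  have cases_D : ∀ d : AmD Z φ m, (∃ y hy, d = inl y hy) ∨ ∃ z, d = inr z := by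
    rintro ⟨y | z, h⟩
    · exact Or.inl ⟨y, h y rfl, rfl⟩
    · exact Or.inr ⟨z, rfl⟩
  have ll : ∀ y hy y' hy', y < y' → inl y hy < inl y' hy' := by
    intro y hy y' hy' h
    rw [hlt]
    have h1 : i y ≤ i y' := imono h.le
    have h2 : UY y ≤ UY y' := hUY h.le
    have h3 : (toLex (Sum.inl y) : Y ⊕ₗ Z) < toLex (Sum.inl y') := by simpa using h
    rcases h1.lt_or_eq with h1 | h1
    · exact Or.inl h1
    rcases h2.lt_or_eq with h2 | h2
    · exact Or.inr ⟨h1, Or.inl h2⟩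
    exact Or.inr ⟨h1, Or.inr ⟨h2, h3⟩⟩
  have rr : ∀ z z', z < z' → inr z < inr z' := by
    intro z z' h
    rw [hlt]
    have h1 : k z ≤ k z' := kmono h.le
    have h2 : UZ z ≤ UZ z' := hUZ h.le
    have h3 : (toLex (Sum.inr z) : Y ⊕ₗ Z) < toLex (Sum.inr z') := by simpa using h
    rcases h1.lt_or_eq with h1 | h1
    · exact Or.inl h1
    rcases h2.lt_or_eq with h2 | h2
    · exact Or.inr ⟨h1, Or.inl h2⟩
    exact Or.inr ⟨h1, Or.inr ⟨h2, h3⟩⟩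
  have lr : ∀ y hy x, y ≤ m x → inl y hy < inr (n x) := by
    intro y hy x h
    rw [hlt]
    have h1 : i y ≤ k (n x) := by rw [hkn]; exact (hi _ _).2 h
    have h2 : UY y ≤ UZ (n x) := by rw [hψ.lab, ← hφ.lab]; exact hUY h
    have h3 : (toLex (Sum.inl y) : Y ⊕ₗ Z) < toLex (Sum.inr (n x)) := by simp
    rcases h1.lt_or_eq with h1 | h1
    · exact Or.inl h1
    rcases h2.lt_or_eq with h2 | h2
    · exact Or.inr ⟨h1, Or.inl h2⟩
    exact Or.inr ⟨h1, Or.inr ⟨h2, h3⟩⟩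
  have rl : ∀ y hy x, m x < y → inr (n x) < inl y hy := by
    intro y hy x h
    rw [hlt]
    left
    change k (n x) < i y
    rw [hkn]
    by_contra h'
    exact absurd ((hi _ _).1 (not_lt.1 h')) (not_le.2 h)
  have lab_le : ∀ d, lab d ≤ UX (idx d) := by
    rintro ⟨y | z, h⟩
    · change UY y ≤ UX (i y)
      rw [← hφ.lab]; exact hUY ((hi _ _).1 le_rfl)
    · change UZ z ≤ UX (k z)
      rw [← hψ.lab]; exact hUZ ((hk _ _).1 le_rfl)
  have le_lab : ∀ d x, x < idx d → UX x ≤ lab d := by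
    rintro ⟨y | z, h⟩ x hx
    · change x < i y at hx
      change UX x ≤ UY y
      rw [← hφ.lab]; apply hUY
      by_contra h'
      exact absurd ((hi _ _).2 (not_le.1 h').le) (not_le.2 hx)
    · change x < k z at hx
      change UX x ≤ UZ z
      rw [← hψ.lab]; apply hUZ
      by_contra h'
      exact absurd ((hk _ _).2 (not_le.1 h').le) (not_le.2 hx)
  classical
  let ρ : AmD Z φ m → Y := fun d => Sum.elim id (fun z => m (ψ z)) d.1
  let σ : AmD Z φ m → Z := fun d => Sum.elim (fun y => n (φ y)) id d.1
  let r : Y → AmD Z φ m := fun y => if h : y = m (φ y) then inr (n (φ y)) else inl y h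
  have r1 : ∀ y, y = m (φ y) → r y = inr (n (φ y)) := fun y h => by simp only [r]; rw [dif_pos h]
  have r2 : ∀ y (h : y ≠ m (φ y)), r y = inl y h := fun y h => by simp only [r]; rw [dif_neg h]
  refine ⟨AmD Z φ m, lo, hfin, lab, ρ, r, σ, inr, ?_, ?_, ?_, ⟨?_, ?_, ?_, ?_⟩, ⟨?_, ?_, ?_, ?_⟩, ?_⟩
  · intro d d' h
    rcases h.lt_or_eq with h | h
    · rcases (hlt _ _).1 h with h | ⟨_, h | h⟩
      · exact (lab_le d).trans (le_lab d' _ h)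
      · exact h.le
      · exact h.1.le
    · rw [h]
  · obtain ⟨x, hx⟩ := hX
    obtain ⟨z, hz, hz'⟩ := hZ
    refine ⟨inr z, hz, ?_⟩
    intro d hd
    rcases cases_D d with ⟨y, hy, rfl⟩ | ⟨z', rfl⟩
    · exfalso
      change UY y = ⊤ at hd
      have : y = m x := hY.unique hd ((hφ.lab x).trans hx)
      apply hy
      rw [this, hφ.sec]
    · rw [hz' z' hd]
  · rintro ⟨y | z, h⟩
    · exact Or.inl ⟨y, rfl⟩
    · exact Or.inr ⟨z, rfl⟩
  · intro y
    by_cases h : y = m (φ y)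
    · rw [r1 y h]
      change m (ψ (n (φ y))) = y
      rw [hψ.sec, ← h]
    · rw [r2 y h]; rfl
  · intro d
    rcases cases_D d with ⟨y, hy, rfl⟩ | ⟨z, rfl⟩
    · exact (r2 y hy).ge
    · change inr z ≤ r (m (ψ z))
      rw [r1 _ (by rw [hφ.sec]), hφ.sec]
      rcases (hψ.le z).lt_or_eq with h | h
      · exact (rr _ _ h).le
      · rw [← h]
  · intro y y' h
    by_cases hy : y = m (φ y) <;> by_cases hy' : y' = m (φ y')
    · rw [r1 y hy, r1 y' hy']
      apply rr
      apply hψ.mono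
      rw [hy, hy'] at h
      exact hφ.mono.lt_iff_lt.1 h
    · rw [r1 y hy, r2 y' hy']
      refine rl _ hy' _ ?_
      rwa [← hy]
    · rw [r2 y hy, r1 y' hy']
      refine lr _ hy _ ?_
      rw [← hy']
      exact h.le
    · rw [r2 y hy, r2 y' hy']
      exact ll _ hy _ hy' h
  · intro y
    by_cases h : y = m (φ y)
    · rw [r1 y h]
      change UZ (n (φ y)) = UY y
      rw [hψ.lab, ← hφ.lab, ← h]
    · rw [r2 y h]; rfl
  · intro z; rfl
  · intro d
    rcases cases_D d with ⟨y, hy, rfl⟩ | ⟨z, rfl⟩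
    · exact (lr _ hy _ (hφ.le y)).le
    · exact le_rfl
  · intro z z' h
    exact rr _ _ h
  · intro z; rfl
  · intro d
    rcases cases_D d with ⟨y, hy, rfl⟩ | ⟨z, rfl⟩
    · exact (hψ.sec _).symm
    · exact hφ.sec _

namespace OrdAlg

variable {J : Type} [LinearOrder J]

/-- Antilexicographic order on sets. -/
def alex {X : Type} [LinearOrder X] (S T : Set X) : Prop :=
  ∃ c, c ∈ T ∧ c ∉ S ∧ ∀ d, c < d → (d ∈ S ↔ d ∈ T)

/-- A representation of an ordered algebra as a power set. -/
structure PRep (A : OrdAlg J) where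
  X : Type
  [lo : LinearOrder X]
  [fin : Finite X]
  U : X → UpperSet J
  e : A.carrier ≃o Set X
  lt_iff : ∀ a b, A.lt a b ↔ alex (e a) (e b)
  P_iff : ∀ j a, a ∈ A.P j ↔ ⊥ ∈ A.P j ∧ ∀ x ∈ e a, j ∈ U x
  U_bot : ∀ j x, j ∈ U x → ⊥ ∈ A.P j
  U_mono : Monotone U
  uniq : ∃! x, U x = ⊤

attribute [instance] PRep.lo PRep.fin

theorem alex_singleton {X : Type} [LinearOrder X] (x y : X) :
    alex ({x} : Set X) {y} ↔ x < y := by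
  constructor
  · rintro ⟨c, hc, hc', h⟩
    simp only [Set.mem_singleton_iff] at hc hc' h
    subst hc
    by_contra hx
    rcases (not_lt.1 hx).lt_or_eq with hx | hx
    · exact hc' ((h x hx).1 rfl).symm
    · exact hc' hx
  · intro h
    refine ⟨y, rfl, fun h' => h.ne h'.symm, fun d hd => ?_⟩
    simp only [Set.mem_singleton_iff]
    exact ⟨fun h' => absurd (h' ▸ hd) h.not_gt, fun h' => absurd (h' ▸ hd) (lt_irrefl _)⟩

theorem alex_sto {X : Type} [LinearOrder X] [Finite X] :
    IsStrictTotalOrder (Set X) alex where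
  trichotomous S T h1 h2 := by
    by_contra hne
    have hn : {x | ¬ (x ∈ S ↔ x ∈ T)}.Nonempty := by
      by_contra h
      rw [Set.not_nonempty_iff_eq_empty, Set.eq_empty_iff_forall_notMem] at h
      exact hne (Set.ext fun x => not_not.1 (h x))
    obtain ⟨c, hc⟩ := (Set.toFinite _).exists_maximal hn
    have hm : ∀ d, c < d → (d ∈ S ↔ d ∈ T) := fun d hd => by
      by_contra h
      exact absurd (hc.2 h hd.le) (not_le.2 hd)
    have hc1 : ¬ (c ∈ S ↔ c ∈ T) := hc.1
    by_cases hT : c ∈ T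
    · exact h1 ⟨c, hT, fun hS => hc1 (by tauto), hm⟩
    · exact h2 ⟨c, by tauto, hT, fun d hd => (hm d hd).symm⟩
  irrefl S := by
    rintro ⟨c, h, h', _⟩
    exact h' h
  trans S T V := by
    rintro ⟨c, h1, h2, h3⟩ ⟨c', h1', h2', h3'⟩
    rcases lt_trichotomy c c' with h | h | h
    · exact ⟨c', h1', fun hh => h2' ((h3 _ h).1 hh),
        fun d hd => (h3 d (h.trans hd)).trans (h3' d hd)⟩
    · subst h; exact absurd h1 h2'
    · exact ⟨c, (h3' _ h).1 h1, h2, fun d hd => (h3 d hd).trans (h3' d (h.trans hd))⟩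

/-- The ordered algebra of a labelled finite linear order. -/
noncomputable def mkAlg (X : Type) [LinearOrder X] [Finite X] (U : X → UpperSet J)
    (flag : J → Prop) : OrdAlg J where
  carrier := Set X
  ba := inferInstance
  fin := Fintype.ofFinite _
  P j := {S | flag j ∧ ∀ x ∈ S, j ∈ U x}
  lt := alex

theorem mkAlg_mem (X : Type) [LinearOrder X] [Finite X] (U : X → UpperSet J)
    (flag : J → Prop) (hflag : ∀ i j, i ≤ j → flag i → flag j)
    (hU : Monotone U) (huniq : ∃! x, U x = ⊤) (hUf : ∀ j x, j ∈ U x → flag j) :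
    (mkAlg X U flag).InNaBJu := by
  refine ⟨⟨?_, ?_, ?_, ?_⟩, ⟨alex_sto, ?_, ?_⟩, ?_⟩
  · rintro j ⟨_, h⟩
    obtain ⟨x, hx, _⟩ := huniq
    have := h x trivial
    rw [hx] at this
    exact UpperSet.notMem_top this
  · rintro j S ⟨h, h'⟩ T hT
    exact ⟨h, fun x hx => h' x (hT hx)⟩
  · rintro j S ⟨h, h'⟩ T ⟨_, h''⟩
    exact ⟨h, fun x hx => hx.elim (h' x) (h'' x)⟩
  · rintro i j hij S ⟨h, h'⟩
    exact ⟨hflag i j hij h, fun x hx => (U x).upper hij (h' x hx)⟩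
  · rintro S T hS hT ⟨i, ⟨h1, h2⟩, h3⟩
    obtain ⟨x, rfl⟩ := Set.isAtom_iff.1 hS
    obtain ⟨y, rfl⟩ := Set.isAtom_iff.1 hT
    refine (alex_singleton x y).2 ?_
    by_contra hxy
    refine h3 ⟨h1, fun z hz => ?_⟩
    obtain rfl : z = y := hz
    exact hU (not_lt.1 hxy) (h2 x rfl)
  · intro (S : Set X) (T : Set X) hST
    constructor
    · rintro ⟨c, h1, h2, h3⟩
      refine ⟨({c} : Set X), Set.isAtom_iff.2 ⟨c, rfl⟩, Set.singleton_subset_iff.2 h1,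
        fun h => h2 (Set.singleton_subset_iff.1 h), ?_⟩
      intro E hE hd
      obtain ⟨d, rfl⟩ := Set.isAtom_iff.1 hE
      have hd' : ¬ (d ∈ S ↔ d ∈ T) := fun h => hd
        (Set.singleton_subset_iff.trans (h.trans Set.singleton_subset_iff.symm))
      rcases lt_trichotomy d c with h | h | h
      · exact Or.inr ((alex_singleton d c).2 h)
      · exact Or.inl (by rw [h])
      · exact absurd (h3 d h) hd'
    · rintro ⟨E, hE, h1, h2, h3⟩
      obtain ⟨c, rfl⟩ := Set.isAtom_iff.1 hE
      refine ⟨c, Set.singleton_subset_iff.1 h1, fun h => h2 (Set.singleton_subset_iff.2 h), ?_⟩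
      intro d hd
      by_contra hn
      have := h3 ({d} : Set X) (Set.isAtom_iff.2 ⟨d, rfl⟩) (fun h => hn
        (Set.singleton_subset_iff.symm.trans (h.trans Set.singleton_subset_iff)))
      rcases this with h | h
      · exact hd.ne (Set.singleton_injective h).symm
      · exact hd.not_gt ((alex_singleton d c).1 h)
  · obtain ⟨x, hx, hx'⟩ := huniq
    refine ⟨({x} : Set X), ⟨Set.isAtom_iff.2 ⟨x, rfl⟩, ?_⟩, ?_⟩
    · rintro j ⟨_, h⟩
      have := h x rfl
      rw [hx] at this
      exact UpperSet.notMem_top this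
    · rintro S ⟨hS, hS'⟩
      obtain ⟨y, rfl⟩ := Set.isAtom_iff.1 hS
      have : U y = ⊤ := by
        apply UpperSet.ext
        apply Set.eq_empty_of_forall_notMem
        intro j hj
        refine hS' j ⟨hUf j y hj, fun z hz => ?_⟩
        obtain rfl : z = y := hz
        exact hj
      rw [hx' y this]

/-- The embedding induced by a good map. -/
def mkEmb {B : OrdAlg J} (R : PRep B) (X : Type) [LinearOrder X] [Finite X] (U : X → UpperSet J)
    (flag : J → Prop) (hflag : ∀ j, flag j ↔ ⊥ ∈ B.P j) (hU : Monotone U)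
    (ρ : X → R.X) (r : R.X → X) (h : GoodMap R.U U ρ r) : Emb B (mkAlg X U flag) where
  toFun b := ρ ⁻¹' (R.e b)
  inj := by
    intro a b hab
    apply R.e.injective
    ext x
    have := Set.ext_iff.1 hab (r x)
    simpa [h.sec] using this
  map_sup x y := by rw [R.e.map_sup]; rfl
  map_inf x y := by rw [R.e.map_inf]; rfl
  map_compl x := by rw [((isCompl_compl (x := x)).map R.e).symm.eq_compl]; rfl
  map_bot := by rw [R.e.map_bot]; rfl
  map_top := by rw [R.e.map_top]; rfl
  map_lt x y := by
    rw [R.lt_iff]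
    constructor
    · rintro ⟨c, h1, h2, h3⟩
      refine ⟨r c, by simpa [h.sec] using h1, by simpa [h.sec] using h2, fun d hd => ?_⟩
      exact h3 (ρ d) (h.mono.lt_iff_lt.1 (hd.trans_le (h.le d)))
    · rintro ⟨c, h1, h2, h3⟩
      refine ⟨ρ c, h1, h2, fun d hd => ?_⟩
      simpa [h.sec] using h3 (r d) ((h.le c).trans_lt (h.mono hd))
  map_P j x := by
    rw [R.P_iff]
    constructor
    · rintro ⟨h1, h2⟩
      refine ⟨(hflag j).2 h1, fun d hd => ?_⟩
      have h3 : U d ≤ R.U (ρ d) := by rw [← h.lab]; exact hU (h.le d)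
      exact h3 (h2 _ hd)
    · rintro ⟨h1, h2⟩
      refine ⟨(hflag j).1 h1, fun d hd => ?_⟩
      rw [← h.lab]
      exact h2 (r d) (by simpa [h.sec] using hd)

theorem dual_emb {A B : OrdAlg J} (RA : PRep A) (RB : PRep B) (f : Emb A B) :
    ∃ φ m, GoodMap RA.U RB.U φ m ∧ ∀ y a, y ∈ RB.e (f.toFun a) ↔ φ y ∈ RA.e a := by
  have h1 : ∀ y, ∃ x, y ∈ RB.e (f.toFun (RA.e.symm {x})) := by
    intro y
    by_contra hn
    push Not at hn
    have key : ∀ S : Set RA.X, y ∉ RB.e (f.toFun (RA.e.symm S)) := by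
      intro S
      induction S, S.toFinite using Set.Finite.induction_on with
      | empty =>
        have : RA.e.symm (∅ : Set RA.X) = ⊥ := RA.e.symm.map_bot
        rw [this, f.map_bot, RB.e.map_bot]
        exact id
      | @insert a S _ _ ih =>
        have : RA.e.symm (insert a S) = RA.e.symm {a} ⊔ RA.e.symm S := by
          rw [← RA.e.symm.map_sup]; rfl
        rw [this, f.map_sup, RB.e.map_sup]
        rintro (h | h)
        · exact hn a h
        · exact ih h
    apply key ⊤
    rw [RA.e.symm.map_top, f.map_top, RB.e.map_top]
    trivial
  choose φ hφ using h1
  have spec : ∀ y a, y ∈ RB.e (f.toFun a) ↔ φ y ∈ RA.e a := by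
    intro y a
    constructor
    · intro h
      by_contra hn
      have : RA.e.symm {φ y} ⊓ a = ⊥ := by
        apply RA.e.injective
        rw [RA.e.map_inf, RA.e.map_bot, RA.e.apply_symm_apply]
        exact Set.singleton_inter_eq_empty.2 hn
      have h2 : y ∈ RB.e (f.toFun (RA.e.symm {φ y} ⊓ a)) := by
        rw [f.map_inf, RB.e.map_inf]
        exact ⟨hφ y, h⟩
      rw [this, f.map_bot, RB.e.map_bot] at h2
      exact h2
    · intro h
      have : RA.e.symm {φ y} ⊔ a = a := by
        apply RA.e.injective
        rw [RA.e.map_sup, RA.e.apply_symm_apply]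
        exact sup_eq_right.2 (Set.singleton_subset_iff.2 h)
      rw [← this, f.map_sup, RB.e.map_sup]
      exact Or.inl (hφ y)
  have h2 : ∀ x, ∃ y, φ y = x ∧ ∀ y', φ y' = x → y' ≤ y := by
    intro x
    have hne : {y | φ y = x}.Nonempty := by
      by_contra hn
      have h3 : f.toFun (RA.e.symm {x}) = f.toFun ⊥ := by
        apply RB.e.injective
        rw [f.map_bot, RB.e.map_bot]
        apply Set.eq_empty_of_forall_notMem
        intro y hy
        rw [spec, RA.e.apply_symm_apply] at hy
        exact hn ⟨y, hy⟩
      have h4 := congrArg RA.e (f.inj h3)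
      rw [RA.e.apply_symm_apply, RA.e.map_bot] at h4
      exact Set.singleton_ne_empty x h4
    obtain ⟨y, hy⟩ := (Set.toFinite _).exists_maximal hne
    exact ⟨y, hy.1, fun y' h => by
      by_contra h'
      exact h' (hy.2 h (not_le.1 h').le)⟩
  choose m hm hm' using h2
  refine ⟨φ, m, ⟨hm, fun y => hm' _ _ rfl, ?_, ?_⟩, spec⟩
  · intro x x' hxx
    have h3 : A.lt (RA.e.symm {x}) (RA.e.symm {x'}) := by
      rw [RA.lt_iff, RA.e.apply_symm_apply, RA.e.apply_symm_apply, alex_singleton]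
      exact hxx
    rw [f.map_lt, RB.lt_iff] at h3
    obtain ⟨c, hc1, hc2, hc3⟩ := h3
    simp only [spec, RA.e.apply_symm_apply, Set.mem_singleton_iff] at hc1 hc2 hc3
    refine lt_of_le_of_ne ?_ fun h => hxx.ne (by rw [← hm x, ← hm x', h])
    refine le_trans ?_ (hm' _ c hc1)
    by_contra h
    have := (hc3 _ (not_le.1 h)).1 (hm x)
    rw [hm] at this
    exact hxx.ne this
  · intro x
    apply UpperSet.ext
    ext j
    change j ∈ RB.U (m x) ↔ j ∈ RA.U x
    have h3 := f.map_P j (RA.e.symm {x})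
    rw [RA.P_iff, RB.P_iff, RA.e.apply_symm_apply] at h3
    have hb := f.map_P j ⊥
    rw [f.map_bot] at hb
    constructor
    · intro h
      have hbot := RB.U_bot j _ h
      refine (h3.2 ⟨hbot, fun y hy => ?_⟩).2 x rfl
      rw [spec, RA.e.apply_symm_apply] at hy
      exact RB.U_mono (hm' x y hy) h
    · intro h
      have hbot := RA.U_bot j _ h
      refine (h3.1 ⟨hbot, fun y hy => ?_⟩).2 (m x) ?_
      · obtain rfl : y = x := hy
        exact h
      · rw [spec, RA.e.apply_symm_apply]
        exact hm x

/-- The atoms. -/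
def At (A : OrdAlg J) : Type := {a : A.carrier // IsAtom a}

theorem exists_rep {A : OrdAlg J} (hA : A.InNaBJu) : Nonempty (PRep A) := by
  classical
  obtain ⟨⟨i1, i2, i3, i4⟩, ⟨sto, prop, nat⟩, u⟩ := hA
  have := sto
  have sto' : IsStrictTotalOrder (At A) (fun a b => A.lt a.1 b.1) :=
    { trichotomous := fun a b h h' => Subtype.ext (Std.Trichotomous.trichotomous a.1 b.1 h h')
      irrefl := fun a => irrefl_of A.lt a.1
      trans := fun a b c => trans_of A.lt }
  let lo : LinearOrder (At A) := linearOrderOfSTO (fun a b : At A => A.lt a.1 b.1)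
  have lo_lt : ∀ a b : At A, a < b ↔ A.lt a.1 b.1 := fun a b => Iff.rfl
  have fin : Finite (At A) := Subtype.finite
  have at_sup : ∀ (a : A.carrier), IsAtom a → ∀ x y, a ≤ x ⊔ y → a ≤ x ∨ a ≤ y := by
    intro a ha x y h
    by_contra hn
    push Not at hn
    have h1 : a ⊓ x = ⊥ :=
      (ha.le_iff.1 inf_le_left).resolve_right fun h => hn.1 (inf_eq_left.1 h)
    have h2 : a ⊓ y = ⊥ :=
      (ha.le_iff.1 inf_le_left).resolve_right fun h => hn.2 (inf_eq_left.1 h)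
    have : a = ⊥ := by
      rw [← inf_eq_left.2 h, inf_sup_left, h1, h2, sup_bot_eq]
    exact ha.1 this
  let fe : A.carrier → Set (At A) := fun a => {x | x.1 ≤ a}
  have fe_le : ∀ a b, fe a ≤ fe b ↔ a ≤ b := by
    intro a b
    constructor
    · intro h
      exact BooleanAlgebra.le_iff_atom_le_imp.2 fun c hc hca => h (a := ⟨c, hc⟩) hca
    · intro h x hx
      exact le_trans hx h
  have fe_surj : Function.Surjective fe := by
    intro S
    induction S, S.toFinite using Set.Finite.induction_on with
    | empty =>
      refine ⟨⊥, Set.eq_empty_of_forall_notMem fun x hx => x.2.1 (le_bot_iff.1 hx)⟩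
    | @insert a S _ _ ih =>
      obtain ⟨b, hb⟩ := ih
      refine ⟨a.1 ⊔ b, ?_⟩
      ext x
      rw [← hb]
      constructor
      · intro hx
        rcases at_sup _ x.2 _ _ hx with h | h
        · exact Or.inl (Subtype.ext ((a.2.le_iff_eq x.2.1).1 h))
        · exact Or.inr h
      · rintro (h | h)
        · rw [h]; exact le_sup_left (a := a.1)
        · exact le_trans h le_sup_right
  let e : A.carrier ≃o Set (At A) := 
    RelIso.ofSurjective (OrderEmbedding.ofMapLEIff fe fe_le) fe_surj
  have he : ∀ a, e a = fe a := fun a => rfl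
  let U : At A → UpperSet J := fun x => ⟨{j | x.1 ∈ A.P j}, fun i j hij h => i4 i j hij h⟩
  have hU : ∀ x j, j ∈ U x ↔ x.1 ∈ A.P j := fun x j => Iff.rfl
  have Utop : ∀ x, U x = ⊤ ↔ ∀ j, x.1 ∉ A.P j := by
    intro x
    constructor
    · intro h j hj
      rw [← hU, h] at hj
      exact UpperSet.notMem_top hj
    · intro h
      apply UpperSet.ext
      exact Set.eq_empty_of_forall_notMem h
  refine ⟨PRep.mk (lo := lo) (fin := fin) (At A) U e ?_ ?_ ?_ ?_ ?_⟩
  · intro a b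
    rw [he, he]
    by_cases hab : a = b
    · subst hab
      refine ⟨fun h => absurd h (irrefl_of A.lt a), ?_⟩
      rintro ⟨c, h, h', _⟩
      exact absurd h h'
    rw [nat a b hab]
    constructor
    · rintro ⟨c, hc, h1, h2, h3⟩
      refine ⟨⟨c, hc⟩, h1, h2, fun d hd => ?_⟩
      by_contra hn
      rcases h3 d.1 d.2 hn with h | h
      · exact hd.ne (Subtype.ext h.symm)
      · exact hd.not_gt h
    · rintro ⟨c, h1, h2, h3⟩
      refine ⟨c.1, c.2, h1, h2, fun d hd hn => ?_⟩
      rcases lt_trichotomy (α := At A) ⟨d, hd⟩ c with h | h | h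
      · exact Or.inr h
      · exact Or.inl (congrArg Subtype.val h)
      · exact absurd (h3 _ h) hn
  · intro j a
    constructor
    · intro h
      exact ⟨i2 j a h _ bot_le, fun x hx => i2 j a h _ hx⟩
    · rintro ⟨h, h'⟩
      have key : ∀ S : Set (At A), (∀ x ∈ S, j ∈ U x) → e.symm S ∈ A.P j := by
        intro S
        induction S, S.toFinite using Set.Finite.induction_on with
        | empty =>
          intro _
          have : e.symm (∅ : Set (At A)) = ⊥ := e.symm.map_bot
          rw [this]
          exact h
        | @insert x S _ _ ih =>
          intro hS
          have h1 : e.symm (insert x S) = e.symm {x} ⊔ e.symm S := by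
            rw [← e.symm.map_sup]; rfl
          have h2 : e.symm {x} = x.1 := by
            rw [e.symm_apply_eq, he]
            ext y
            constructor
            · intro hy
              obtain rfl : y = x := hy
              exact le_refl y.1
            · intro hy
              exact Subtype.ext ((x.2.le_iff_eq y.2.1).1 hy)
          rw [h1, h2]
          exact i3 j _ (hS x (Set.mem_insert _ _)) _
            (ih fun y hy => hS y (Set.mem_insert_of_mem _ hy))
      have := key (e a) h'
      rwa [e.symm_apply_apply] at this
  · intro j x h
    exact i2 j _ h _ bot_le
  · intro x y hxy j hj
    by_contra hn
    exact absurd ((lo_lt y x).2 (prop y.1 x.1 y.2 x.2 ⟨j, hj, hn⟩)) (not_lt.2 hxy)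
  · obtain ⟨a, ⟨ha, ha'⟩, hu⟩ := u
    refine ⟨⟨a, ha⟩, (Utop _).2 ha', fun y hy => ?_⟩
    exact Subtype.ext (hu y.1 ⟨y.2, (Utop y).1 hy⟩)

end OrdAlg

theorem naBJu_amalgamation {J : Type} [LinearOrder J]
    (A B C : OrdAlg J) (hA : A.InNaBJu) (hB : B.InNaBJu) (hC : C.InNaBJu)
    (f : OrdAlg.Emb A B) (g : OrdAlg.Emb A C) :
    ∃ D : OrdAlg J, D.InNaBJu ∧
      ∃ (r : OrdAlg.Emb B D) (s : OrdAlg.Emb C D),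
        r.toFun ∘ f.toFun = s.toFun ∘ g.toFun := by
  obtain ⟨RA⟩ := OrdAlg.exists_rep hA
  obtain ⟨RB⟩ := OrdAlg.exists_rep hB
  obtain ⟨RC⟩ := OrdAlg.exists_rep hC
  obtain ⟨φ, m, hφ, hf⟩ := OrdAlg.dual_emb RA RB f
  obtain ⟨ψ, n, hψ, hg⟩ := OrdAlg.dual_emb RA RC g
  obtain ⟨D, lo, fin, U, ρ, r, σ, s, hU, huniq, hrange, hρ, hσ, hcomm⟩ :=
    dual_amalg RA.U RB.U RC.U RB.U_mono RC.U_mono RA.uniq.exists RB.uniq RC.uniq φ m ψ n hφ hψ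
  have fB : ∀ j, ⊥ ∈ A.P j ↔ ⊥ ∈ B.P j := fun j => by rw [f.map_P, f.map_bot]
  have fC : ∀ j, ⊥ ∈ A.P j ↔ ⊥ ∈ C.P j := fun j => by rw [g.map_P, g.map_bot]
  refine ⟨OrdAlg.mkAlg D U (fun j => ⊥ ∈ A.P j), OrdAlg.mkAlg_mem D U _ ?_ hU huniq ?_,
    OrdAlg.mkEmb RB D U _ fB hU ρ r hρ, OrdAlg.mkEmb RC D U _ fC hU σ s hσ, ?_⟩
  · intro i j hij h
    exact hA.1.2.2.2 i j hij h
  · intro j d hj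
    rcases hrange d with ⟨y, hy⟩ | ⟨z, hz⟩
    · exact (fB j).2 (RB.U_bot j y (by rw [hy]; exact hj))
    · exact (fC j).2 (RC.U_bot j z (by rw [hz]; exact hj))
  · funext a
    apply Set.ext
    intro d
    change ρ d ∈ RB.e (f.toFun a) ↔ σ d ∈ RC.e (g.toFun a)
    rw [hf, hg, hcomm]
end

section
/- The class na(B_J) satisfies the Ramsey property: for all structures (A, <_A), (B, <_B) in na(B_J) such that (A, <_A) embeds into (B, <_B), and every integer k ≥ 2, there exists a structure (C, <_C) in na(B_J) such that for every coloring of the copies of (A, <_A) in (C, <_C) with k colors there is a copy B' of (B, <_B) in (C, <_C) all of whose copies of (A, <_A) receive the same color. -/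
namespace NaRamsey

open Sum

/-- parameter words with ordered first occurrences. -/
def Rig {N K M : Type} [LinearOrder N] [LinearOrder M] (w : N → K ⊕ M) : Prop :=
  (∀ m, ∃ t, w t = inr m) ∧
  ∀ t m m', w t = inr m → m' ≤ m → ∃ s, s ≤ t ∧ w s = inr m'

/-- substitution of parameter words. -/
def sub {N K M A : Type} (h : N → K ⊕ M) (v : M → K ⊕ A) : N → K ⊕ A :=
  fun t => Sum.elim inl v (h t)

theorem sub_assoc {N K M A B : Type} (h : N → K ⊕ M) (v : M → K ⊕ A) (u : A → K ⊕ B) :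
    sub (sub h v) u = sub h (sub v u) := by
  funext t
  simp only [sub]
  rcases h t with k | m <;> rfl

theorem Rig.sub {N K M A : Type} [LinearOrder N] [LinearOrder M] [LinearOrder A]
    {h : N → K ⊕ M} {v : M → K ⊕ A} (hh : Rig h) (hv : Rig v) : Rig (sub h v) := by
  constructor
  · intro a
    obtain ⟨m, hm⟩ := hv.1 a
    obtain ⟨t, ht⟩ := hh.1 m
    exact ⟨t, by simp [NaRamsey.sub, ht, hm]⟩
  · intro t a a' hta haa
    simp only [NaRamsey.sub] at hta
    rcases hht : h t with k | m
    · simp [hht] at hta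
    · simp only [hht, Sum.elim_inr] at hta
      obtain ⟨m', hm', e⟩ := hv.2 m a a' hta haa
      obtain ⟨s, hs, e'⟩ := hh.2 t m m' hht hm'
      exact ⟨s, hs, by simp [NaRamsey.sub, e, e']⟩

theorem lex_cases {N M : Type} {p : N ⊕ₗ M → Prop} (h1 : ∀ n, p (toLex (inl n)))
    (h2 : ∀ n, p (toLex (inr n))) (t : N ⊕ₗ M) : p t := by
  rcases t with n | n
  · exact h1 n
  · exact h2 n

theorem lex_inr_not_le {N M : Type} [LinearOrder N] [LinearOrder M] (n : N) (m : M) :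
    ¬ (toLex (inr m) : N ⊕ₗ M) ≤ toLex (inl n) := by
  simp

/-- concatenation. -/
def cat {N M X : Type} (f : N → X) (g : M → X) : N ⊕ₗ M → X :=
  fun t => Sum.elim f g (ofLex t)

@[simp] theorem cat_inl {N M X : Type} (f : N → X) (g : M → X) (n : N) :
    cat f g (toLex (inl n)) = f n := rfl
@[simp] theorem cat_inr {N M X : Type} (f : N → X) (g : M → X) (n : M) :
    cat f g (toLex (inr n)) = g n := rfl

theorem cat_ext {N M X : Type} {f : N ⊕ₗ M → X} {f1 : N → X} {f2 : M → X}
    (h1 : ∀ n, f (toLex (inl n)) = f1 n) (h2 : ∀ n, f (toLex (inr n)) = f2 n) :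
    f = cat f1 f2 := by
  funext t
  revert t
  exact lex_cases h1 h2

/-- Words over `Option K`: substitution. -/
def subO {N K M : Type} (h : N → K ⊕ M) (v : M → Option K) : N → Option K :=
  fun t => Sum.elim some v (h t)

open Classical in
/-- cut a word at the first `none`. -/
noncomputable def cut {N K : Type} [LinearOrder N] (u : N → Option K) : N → Option K :=
  fun t => if ∀ s ≤ t, u s ≠ none then u t else none

theorem cut_congr {N N' K : Type} [LinearOrder N] [LinearOrder N'] {u : N → Option K}
    {u' : N' → Option K} {t : N} {t' : N'}
    (h : (∀ s ≤ t, u s ≠ none) ↔ ∀ s ≤ t', u' s ≠ none) (e : u t = u' t') :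
    cut u t = cut u' t' := by
  simp only [cut]
  by_cases hh : ∀ s ≤ t, u s ≠ none
  · rw [if_pos hh, if_pos (h.1 hh), e]
  · rw [if_neg hh, if_neg (fun h' => hh (h.2 h'))]

/-- forget the parameters. -/
def toO {N K A : Type} (v : N → K ⊕ A) : N → Option K := fun t => Sum.elim some (fun _ => none) (v t)

theorem toO_sub {N K M A : Type} (h : N → K ⊕ M) (v : M → K ⊕ A) :
    toO (sub h v) = subO h (toO v) := by
  funext t
  simp only [toO, sub, subO]
  rcases h t with k | m <;> rfl

theorem exists_linearOrder (ι : Type) [Finite ι] : Nonempty (LinearOrder ι) := by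
  have := Fintype.ofFinite ι
  exact ⟨LinearOrder.lift' (Fintype.equivFin ι) (Fintype.equivFin ι).injective⟩

/-- Hales-Jewett with ordered parameters. -/
theorem gr_zero (K B κ : Type) [Finite K] [Finite κ] [Finite B] [LinearOrder B] :
    ∃ (N : Type) (_ : LinearOrder N) (_ : Finite N), ∀ χ : (N → K) → κ,
      ∃ h : N → K ⊕ B, Rig h ∧ ∃ c, ∀ v : B → K, χ (fun t => Sum.elim id v (h t)) = c := by
  obtain ⟨ι, _, hι⟩ := Combinatorics.Line.exists_mono_in_high_dimension (B → K) κ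
  obtain ⟨_⟩ := exists_linearOrder ι
  refine ⟨ι ×ₗ B, inferInstance, inferInstanceAs (Finite (ι × B)), fun χ => ?_⟩
  obtain ⟨l, c, hc⟩ := hι (fun x => χ fun t => x (ofLex t).1 (ofLex t).2)
  refine ⟨fun t => (l.idxFun (ofLex t).1).elim (inr (ofLex t).2) (fun f => inl (f (ofLex t).2)),
    ⟨?_, ?_⟩, c, ?_⟩
  · intro b
    obtain ⟨i, hi⟩ := l.proper
    exact ⟨toLex (i, b), by simp [hi]⟩
  · intro t b b' ht hb
    rcases hl : l.idxFun (ofLex t).1 with _ | f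
    · simp only [hl, Option.elim_none, inr.injEq] at ht
      refine ⟨toLex ((ofLex t).1, b'), ?_, by simp [hl]⟩
      rw [Prod.Lex.le_iff]
      right
      exact ⟨rfl, by rw [ht]; exact hb⟩
    · simp [hl] at ht
  · intro v
    rw [← hc v]
    congr 1
    funext t
    simp only [Combinatorics.Line.coe_apply]
    rcases hl : l.idxFun (ofLex t).1 with _ | f <;> simp

theorem cut_cat_none {N M K : Type} [LinearOrder N] [LinearOrder M] (f : N → Option K)
    (g : M → Option K) (hf : ∃ n, f n = none) :
    cut (cat f g) = cat (cut f) (fun _ => none) := by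
  apply cat_ext
  · intro n
    have : (∀ s ≤ (toLex (inl n) : N ⊕ₗ M), cat f g s ≠ none) ↔ ∀ s ≤ n, f s ≠ none := by
      constructor
      · intro h s hs
        exact h (toLex (inl s)) (by simpa using hs)
      · intro h
        refine lex_cases ?_ ?_
        · intro s hs
          exact h s (by simpa using hs)
        · intro s hs
          exact absurd hs (lex_inr_not_le _ _)
    exact cut_congr this rfl
  · intro n
    obtain ⟨m, hm⟩ := hf
    simp only [cut]
    rw [if_neg]
    intro h
    exact h (toLex (inl m)) (Sum.Lex.inl_le_inr _ _) hm

theorem cut_cat_some {N M K : Type} [LinearOrder N] [LinearOrder M] (f : N → K)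
    (g : M → Option K) :
    cut (cat (fun n => some (f n)) g) = cat (fun n => some (f n)) (cut g) := by
  apply cat_ext
  · intro n
    simp only [cut]
    rw [if_pos]
    · rfl
    · refine lex_cases ?_ ?_
      · intro s hs
        simp
      · intro s hs
        exact absurd hs (lex_inr_not_le _ _)
  · intro n
    have : (∀ s ≤ (toLex (inr n) : N ⊕ₗ M), cat (fun n => some (f n)) g s ≠ none) ↔
        ∀ s ≤ n, g s ≠ none := by
      constructor
      · intro h s hs
        exact h (toLex (inr s)) (by simpa using hs)
      · intro h
        refine lex_cases ?_ ?_
        · intro s hs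
          simp
        · intro s hs
          exact h s (by simpa using hs)
    exact cut_congr this rfl

/-- shifting parameters. -/
theorem rig_cat {N M K : Type} [LinearOrder N] [LinearOrder M] {b : ℕ}
    (f : N → K ⊕ Fin (b+1)) (g : M → K ⊕ Fin (b+1))
    (hf : ∃ n, f n = inr 0) (hf' : ∀ n j, f n = inr j → j = 0)
    (hg : ∀ j : Fin b, ∃ m, g m = inr j.succ)
    (hg' : ∀ m (j j' : Fin b), g m = inr j.succ → j' ≤ j → ∃ s, s ≤ m ∧ g s = inr j'.succ) :
    Rig (cat f g) := by
  obtain ⟨n0, hn0⟩ := hf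
  constructor
  · intro j
    refine Fin.cases ?_ (fun j => ?_) j
    · exact ⟨toLex (inl n0), by simpa using hn0⟩
    · obtain ⟨m, hm⟩ := hg j
      exact ⟨toLex (inr m), by simpa using hm⟩
  · refine lex_cases ?_ ?_
    · intro n j j' hn hj
      have := hf' n j hn
      subst this
      have : j' = 0 := by simpa using hj
      subst this
      exact ⟨_, le_rfl, hn⟩
    · intro m j j' hm hj
      refine Fin.cases (fun _ _ => ?_) (fun j' => ?_) j' hj hj
      · exact ⟨toLex (inl n0), Sum.Lex.inl_le_inr _ _, hn0⟩
      · intro _ hj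
        have hj0 : j ≠ 0 := by
          rintro rfl
          simp at hj
        obtain ⟨i, rfl⟩ := Fin.exists_succ_eq.2 hj0
        obtain ⟨s, hs, e⟩ := hg' m i j' hm (by simpa using hj)
        exact ⟨toLex (inr s), by simpa using hs, e⟩

/-- cutpoint lemma, colour depends only on the place of the cut. -/
theorem cutpoint_aux (K : Type) [Finite K] (b : ℕ) : ∀ (κ : Type) [Finite κ],
    ∃ (M : Type) (_ : LinearOrder M) (_ : Finite M), ∀ c : (M → Option K) → κ,
      ∃ h : M → K ⊕ Fin b, Rig h ∧ ∀ (v v' : Fin b → Option K) (i : Fin b),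
        v i = none → v' i = none → (∀ j < i, v j ≠ none ∧ v' j ≠ none) →
        c (cut (subO h v)) = c (cut (subO h v')) := by
  induction b with
  | zero =>
    intro κ _
    refine ⟨Fin 0, inferInstance, inferInstance, fun c => ⟨fun t => t.elim0, ⟨?_, ?_⟩, ?_⟩⟩
    · intro m; exact m.elim0
    · intro m; exact m.elim0
    · intro v v' i; exact i.elim0
  | succ b ih =>
    intro κ _
    obtain ⟨ι, _, hι⟩ := Combinatorics.Line.exists_mono_in_high_dimension K
      ((Fin b → Option K) → κ)
    obtain ⟨_⟩ := exists_linearOrder ι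
    obtain ⟨M, _, _, hM⟩ := ih ((ι → K) → κ)
    refine ⟨ι ⊕ₗ M, inferInstance, inferInstanceAs (Finite (ι ⊕ M)), fun c => ?_⟩
    obtain ⟨h', hr, hh'⟩ := hM (fun u w => c (cat (fun i => some (w i)) u))
    obtain ⟨l, col, hl⟩ := hι (fun w v => c (cat (fun i => some (w i)) (cut (subO h' v))))
    let f : ι → K ⊕ Fin (b+1) := fun i => (l.idxFun i).elim (inr 0) inl
    let g : M → K ⊕ Fin (b+1) := fun t => Sum.map id Fin.succ (h' t)
    have key0 : ∀ v : Fin (b+1) → Option K, subO (cat f g) v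
        = cat (fun i => (l.idxFun i).elim (v 0) some) (subO h' (fun j => v j.succ)) := by
      intro v
      apply cat_ext
      · intro n
        simp only [subO, cat_inl, f]
        rcases l.idxFun n with _ | k <;> simp
      · intro n
        simp only [subO, cat_inr, g]
        rcases h' n with _ | k <;> simp
    refine ⟨cat f g, rig_cat f g ?_ ?_ ?_ ?_, ?_⟩
    · obtain ⟨i, hi⟩ := l.proper
      exact ⟨i, by simp [f, hi]⟩
    · intro n j hn
      rcases hln : l.idxFun n with _ | k
      · simp only [f, hln, Option.elim_none, inr.injEq] at hn
        exact hn.symm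
      · simp [f, hln] at hn
    · intro j
      obtain ⟨t, ht⟩ := hr.1 j
      exact ⟨t, by simp [g, ht]⟩
    · intro m j j' hm hj
      have : h' m = inr j := by
        rcases hhm : h' m with k | i
        · simp [g, hhm] at hm
        · simpa [g, hhm] using hm
      obtain ⟨s, hs, e⟩ := hr.2 m j j' this hj
      exact ⟨s, hs, by simp [g, e]⟩
    · intro v v' i
      refine Fin.cases ?_ (fun i => ?_) i
      · intro hv hv' _
        rw [key0, key0, hv, hv']
        obtain ⟨i, hi⟩ := l.proper
        rw [cut_cat_none _ _ ⟨i, by simp [hi]⟩, cut_cat_none _ _ ⟨i, by simp [hi]⟩]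
      · intro hv hv' hj
        obtain ⟨h0, h0'⟩ := hj 0 (Fin.succ_pos i)
        obtain ⟨k, hk⟩ := Option.ne_none_iff_exists'.1 h0
        obtain ⟨k', hk'⟩ := Option.ne_none_iff_exists'.1 h0'
        have key1 : ∀ k, (fun i => (l.idxFun i).elim (some k) some) = fun i => some (l k i) := by
          intro k
          funext i
          simp only [Combinatorics.Line.coe_apply]
          rcases l.idxFun i with _ | k <;> simp
        rw [key0, key0, hk, hk', key1, key1, cut_cat_some, cut_cat_some]
        have e1 := congrFun ((hl k).trans (hl k').symm) (fun j => v j.succ)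
        have e2 := congrFun (hh' (fun j => v j.succ) (fun j => v' j.succ) i hv hv'
          (fun j hji => hj j.succ (by simpa using hji))) (l k')
        exact e1.trans e2

theorem exists_first_none {B K : Type} [LinearOrder B] [Finite B] (v : B → Option K)
    (hv : ∃ b, v b = none) : ∃ b, v b = none ∧ ∀ j < b, v j ≠ none := by
  obtain ⟨b, hb⟩ := (Set.toFinite {b | v b = none}).exists_minimal hv
  exact ⟨b, hb.1, fun j hj e => hb.not_lt e hj⟩

theorem cutpoint_lemma (K : Type) [Finite K] (B κ : Type) [LinearOrder B] [Finite B] [Finite κ] 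
    [Nonempty κ] :
    ∃ (M : Type) (_ : LinearOrder M) (_ : Finite M), ∀ c : (M → Option K) → κ,
      ∃ h : M → K ⊕ B, Rig h ∧ ∀ (v v' : B → Option K),
        (∃ b, v b = none) → (∃ b, v' b = none) →
        c (cut (subO h v)) = c (cut (subO h v')) := by
  classical
  rcases isEmpty_or_nonempty K with hK | ⟨⟨k0⟩⟩
  · refine ⟨B, inferInstance, inferInstance, fun c => ⟨inr, ⟨fun m => ⟨m, rfl⟩, ?_⟩, ?_⟩⟩
    · intro t m m' ht hm
      refine ⟨m', ?_, rfl⟩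
      rw [inr.injEq] at ht
      rwa [ht]
    · intro v v' _ _
      congr 1
      funext t
      exact Subsingleton.elim _ _
  · have := Fintype.ofFinite B
    have := Fintype.ofFinite κ
    obtain ⟨M, _, _, hM⟩ := cutpoint_aux K (Fintype.card κ * Fintype.card B) κ
    refine ⟨M, inferInstance, inferInstance, fun c => ?_⟩
    obtain ⟨h', hr, hh'⟩ := hM c
    let d : Fin (Fintype.card κ * Fintype.card B) → κ := fun i =>
      c (cut (subO h' (fun j => if j < i then some k0 else none)))
    obtain ⟨col, hcol⟩ := Fintype.exists_le_card_fiber_of_mul_le_card d (n := Fintype.card B)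
      (by simp)
    let e1 := Finset.orderEmbOfCardLe _ hcol
    have he1 : ∀ x, d (e1 x) = col := by
      intro x
      have := Finset.orderEmbOfCardLe_mem _ hcol x
      simpa using this
    let e2 := (Fintype.orderIsoFinOfCardEq B rfl).symm
    let e : B ↪o Fin (Fintype.card κ * Fintype.card B) := e2.toOrderEmbedding.trans e1
    have he : ∀ x, d (e x) = col := fun x => he1 _
    let h2 : Fin (Fintype.card κ * Fintype.card B) → K ⊕ B := fun t =>
      if hx : ∃ x, e x = t then inr hx.choose else inl k0
    have h2e : ∀ x, h2 (e x) = inr x := by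
      intro x
      have hx : ∃ y, e y = e x := ⟨x, rfl⟩
      simp only [h2, dif_pos hx]
      congr 1
      exact e.injective hx.choose_spec
    have h2n : ∀ t x, h2 t = inr x → t = e x := by
      intro t x ht
      by_cases hx : ∃ x, e x = t
      · obtain ⟨y, rfl⟩ := hx
        rw [h2e, inr.injEq] at ht
        rw [ht]
      · simp [h2, dif_neg hx] at ht
    have hr2 : Rig h2 := by
      refine ⟨fun m => ⟨e m, h2e m⟩, ?_⟩
      intro t m m' ht hm
      refine ⟨e m', ?_, h2e _⟩
      rw [h2n t m ht]
      exact e.le_iff_le.2 hm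
    refine ⟨sub h' h2, hr.sub hr2, ?_⟩
    suffices H : ∀ v : B → Option K, (∃ b, v b = none) → 
        c (cut (subO (sub h' h2) v)) = col by
      intro v v' hv hv'
      rw [H v hv, H v' hv']
    intro v hv
    obtain ⟨b, hb, hb'⟩ := exists_first_none v hv
    have : subO (sub h' h2) v = subO h' (subO h2 v) := by
      funext t
      simp only [sub, subO]
      rcases h' t with k | m <;> rfl
    rw [this, ← he b]
    apply hh' _ _ (e b)
    · simp [subO, h2e, hb]
    · simp
    · intro j hj
      constructor
      · simp only [subO]
        rcases hj2 : h2 j with k | x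
        · simp
        · simp only [Sum.elim_inr]
          apply hb'
          rw [h2n j x hj2] at hj
          exact e.lt_iff_lt.1 hj
      · simp [hj]


/-- The Graham-Rothschild statement for `a` parameters. -/
def GR (a : ℕ) : Prop := ∀ (K B κ : Type) [Finite K] [LinearOrder B] [Finite B] [Finite κ]
    [Nonempty κ],
    ∃ (N : Type) (_ : LinearOrder N) (_ : Finite N), ∀ χ : (N → K ⊕ Fin a) → κ,
      ∃ h : N → K ⊕ B, Rig h ∧ ∃ c, ∀ v : B → K ⊕ Fin a, Rig v → χ (sub h v) = c

theorem gr0 : GR 0 := by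
  intro K B κ _ _ _ _ _
  obtain ⟨N, _, _, hN⟩ := gr_zero K B κ
  refine ⟨N, inferInstance, inferInstance, fun χ => ?_⟩
  obtain ⟨h, hr, c, hc⟩ := hN (fun w => χ (fun t => inl (w t)))
  refine ⟨h, hr, c, fun v _ => ?_⟩
  let v' : B → K := fun b => Sum.elim id (fun i : Fin 0 => i.elim0) (v b)
  rw [← hc v']
  congr 1
  funext t
  simp only [sub]
  rcases h t with k | b
  · simp
  · simp only [Sum.elim_inr, v']
    rcases v b with k | i
    · simp
    · exact i.elim0

/-- turn the new letter into the parameter `0`. -/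
def lower {K : Type} {a : ℕ} : Option K ⊕ Fin a → K ⊕ Fin (a+1)
  | inl none => inr 0
  | inl (some k) => inl k
  | inr i => inr i.succ

/-- inverse of `lower`. -/
def raise {K : Type} {a : ℕ} (x : K ⊕ Fin (a+1)) : Option K ⊕ Fin a :=
  Sum.elim (fun k => inl (some k)) (fun i => Fin.cases (inl none) (fun j => inr j) i) x

theorem lower_raise {K : Type} {a : ℕ} (x : K ⊕ Fin (a+1)) : lower (raise x) = x := by
  rcases x with k | i
  · rfl
  · refine Fin.cases ?_ (fun j => ?_) i <;> rfl

theorem raise_eq_inr {K : Type} {a : ℕ} (x : K ⊕ Fin (a+1)) (j : Fin a) :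
    raise x = inr j ↔ x = inr j.succ := by
  constructor
  · intro h
    rw [← lower_raise x, h]
    rfl
  · rintro rfl
    rfl

theorem lower_eq_inr {K : Type} {a : ℕ} (x : Option K ⊕ Fin a) (j : Fin a) :
    lower x = inr j.succ ↔ x = inr j := by
  rcases x with (_ | k) | i
  · simp [lower, (Fin.succ_ne_zero j).symm]
  · simp [lower]
  · simp [lower]

/-- instantiate the new letter. -/
def inst {K X : Type} (k : K) : Option K ⊕ X → K ⊕ X :=
  Sum.map (fun o => o.getD k) id

theorem cut_eq_zero {K : Type} {m : ℕ} {a : ℕ} {v v' : Fin (m+1) → K ⊕ Fin a}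
    (h : cut (toO v) = cut (toO v')) : toO v 0 = toO v' 0 := by
  have h0 := congrFun h 0
  have : ∀ u : Fin (m+1) → Option K, cut u 0 = u 0 := by
    intro u
    simp only [cut]
    split_ifs with hh
    · rfl
    · push Not at hh
      obtain ⟨s, hs, e⟩ := hh
      have : s = 0 := by simpa using hs
      rw [← this, e]
  rwa [this, this] at h0

theorem cut_tail {K : Type} {m : ℕ} (u : Fin (m+1) → Option K) (h0 : u 0 ≠ none) (t : Fin m) :
    cut u t.succ = cut (fun j => u j.succ) t := by
  refine cut_congr ?_ rfl
  constructor
  · intro h s hs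
    exact h s.succ (by simpa using hs)
  · intro h s
    refine Fin.cases (fun _ => h0) (fun s hs => ?_) s
    exact h s (by simpa using hs)

theorem cut_map {N K K' : Type} [LinearOrder N] (f : K → K') (u : N → Option K) :
    cut (fun t => (u t).map f) = fun t => (cut u t).map f := by
  funext t
  have : (∀ s ≤ t, (u s).map f ≠ none) ↔ ∀ s ≤ t, u s ≠ none := by simp
  simp only [cut]
  by_cases h : ∀ s ≤ t, u s ≠ none
  · rw [if_pos h, if_pos (this.2 h)]
  · rw [if_neg h, if_neg (fun hh => h (this.1 hh))]
    rfl

/-- Colour depends only on the cut. -/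
theorem tail_lemma {a : ℕ} (hGR : GR a) (m : ℕ) : ∀ (K κ : Type) [Finite K] [Finite κ] [Nonempty κ],
    ∃ (N : Type) (_ : LinearOrder N) (_ : Finite N), ∀ χ : (N → K ⊕ Fin (a+1)) → κ,
      ∃ h : N → K ⊕ Fin m, Rig h ∧ ∀ v v' : Fin m → K ⊕ Fin (a+1), Rig v → Rig v' →
        cut (toO v) = cut (toO v') → χ (sub h v) = χ (sub h v') := by
  induction m with
  | zero =>
    intro K κ _ _ _
    refine ⟨Fin 0, inferInstance, inferInstance, fun c => ⟨fun t => t.elim0, ⟨?_, ?_⟩, ?_⟩⟩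
    · intro m; exact m.elim0
    · intro m; exact m.elim0
    · intro v v' _ _ _
      rw [Subsingleton.elim v v']
  | succ m ih =>
    intro K κ _ _ _
    obtain ⟨M1, _, _, hM1⟩ := ih (Option K) (K → κ)
    obtain ⟨N, _, _, hN⟩ := hGR (Option K) M1 κ
    refine ⟨Unit ⊕ₗ N, inferInstance, inferInstanceAs (Finite (Unit ⊕ N)), fun χ => ?_⟩
    obtain ⟨h1, hr1, c, hc⟩ := hN (fun u => χ (cat (fun _ => inr 0) (fun t => lower (u t))))
    obtain ⟨h2, hr2, hh2⟩ := hM1 (fun u k => χ (cat (fun _ => inl k)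
      (fun t => inst k (sub h1 u t))))
    have hr : Rig (sub h1 h2) := hr1.sub hr2
    refine ⟨cat (fun _ => inr 0) (fun t => lower (sub h1 h2 t)), rig_cat _ _ ?_ ?_ ?_ ?_, ?_⟩
    · exact ⟨(), rfl⟩
    · intro n j hj
      rw [inr.injEq] at hj
      exact hj.symm
    · intro j
      obtain ⟨t, ht⟩ := hr.1 j
      exact ⟨t, by rw [ht]; rfl⟩
    · intro t j j' ht hj
      rw [lower_eq_inr] at ht
      obtain ⟨s, hs, e⟩ := hr.2 t j j' ht hj
      exact ⟨s, hs, by rw [e]; rfl⟩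
    · intro v v' hv hv' hcut
      have h0 := cut_eq_zero hcut
      have tailrig : ∀ v : Fin (m+1) → K ⊕ Fin (a+1), Rig v → ∀ k, v 0 = inl k →
          Rig (fun j : Fin m => (Sum.map some id (v j.succ) : Option K ⊕ Fin (a+1))) := by
        intro v hv k hk
        have e : ∀ x : K ⊕ Fin (a+1), ∀ i, (Sum.map some id x : Option K ⊕ Fin (a+1)) = inr i ↔
            x = inr i := by
          rintro (x | x) i <;> simp
        constructor
        · intro i
          obtain ⟨t, ht⟩ := hv.1 i
          refine Fin.cases (fun ht => ?_) (fun t ht => ?_) t ht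
          · rw [hk] at ht
            cases ht
          · exact ⟨t, (e _ _).2 ht⟩
        · intro t i i' ht hi
          rw [e] at ht
          obtain ⟨s, hs, es⟩ := hv.2 _ _ _ ht hi
          refine Fin.cases (fun hs es => ?_) (fun s hs es => ?_) s hs es
          · rw [hk] at es
            cases es
          · exact ⟨s, by simpa using hs, (e _ _).2 es⟩
      have raiserig : ∀ v : Fin (m+1) → K ⊕ Fin (a+1), Rig v → ∀ k, v 0 = inr k →
          k = 0 ∧ Rig (fun j : Fin m => raise (v j.succ)) := by
        intro v hv k hk
        have hk0 : k = 0 := by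
          obtain ⟨s, hs, e⟩ := hv.2 0 k 0 hk (Fin.zero_le _)
          have : s = 0 := by simpa using hs
          rw [this, hk, inr.injEq] at e
          exact e
        subst hk0
        refine ⟨rfl, ?_, ?_⟩
        · intro i
          obtain ⟨t, ht⟩ := hv.1 i.succ
          refine Fin.cases (fun ht => ?_) (fun t ht => ?_) t ht
          · rw [hk, inr.injEq] at ht
            exact absurd ht.symm (Fin.succ_ne_zero i)
          · exact ⟨t, (raise_eq_inr _ _).2 ht⟩
        · intro t i i' ht hi
          rw [raise_eq_inr] at ht
          obtain ⟨s, hs, es⟩ := hv.2 _ _ i'.succ ht (by simpa using hi)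
          refine Fin.cases (fun hs es => ?_) (fun s hs es => ?_) s hs es
          · rw [hk, inr.injEq] at es
            exact absurd es.symm (Fin.succ_ne_zero i')
          · exact ⟨s, by simpa using hs, (raise_eq_inr _ _).2 es⟩
      rcases hv0 : v 0 with k | i
      · rcases hv0' : v' 0 with k' | i'
        · have : k' = k := by
            simpa [toO, hv0, hv0'] using h0.symm
          subst this
          have key : ∀ v : Fin (m+1) → K ⊕ Fin (a+1), v 0 = inl k' →
              sub (cat (fun _ : Unit => inr 0) (fun t => lower (sub h1 h2 t))) v
              = cat (fun _ => inl k') (fun t => inst k' (sub h1 (sub h2 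
                (fun j : Fin m => Sum.map some id (v j.succ))) t)) := by
            intro v hv
            rw [← sub_assoc]
            apply cat_ext
            · intro n
              simp [sub, hv]
            · intro n
              conv_lhs => rw [sub]
              conv_rhs => rw [sub]
              simp only [cat_inr]
              rcases sub h1 h2 n with (_ | k) | i
              · simp [lower, inst, hv]
              · simp [lower, inst]
              · simp only [lower, inst, Sum.elim_inr]
                rcases v i.succ with k | i <;> simp
          rw [key v hv0, key v' hv0']
          refine congrFun (hh2 _ _ (tailrig v hv _ hv0) (tailrig v' hv' _ hv0') ?_) k'
          have e : ∀ v : Fin (m+1) → K ⊕ Fin (a+1), v 0 = inl k' →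
              cut (toO (fun j : Fin m => (Sum.map some id (v j.succ) : Option K ⊕ Fin (a+1))))
              = fun t => (cut (toO v) t.succ).map some := by
            intro v hv
            have : (toO (fun j : Fin m => (Sum.map some id (v j.succ) : Option K ⊕ Fin (a+1))))
                = fun t => (toO v t.succ).map some := by
              funext t
              simp only [toO]
              rcases v t.succ with k | i <;> simp
            rw [this, cut_map some (fun t : Fin m => toO v t.succ)]
            funext t
            rw [cut_tail]
            simp [toO, hv]
          rw [e v hv0, e v' hv0', hcut]
        · simp [toO, hv0, hv0'] at h0
      · rcases hv0' : v' 0 with k' | i'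
        · simp [toO, hv0, hv0'] at h0
        · obtain ⟨rfl, r1⟩ := raiserig v hv _ hv0
          obtain ⟨rfl, r2⟩ := raiserig v' hv' _ hv0'
          have key : ∀ v : Fin (m+1) → K ⊕ Fin (a+1), v 0 = inr 0 →
              sub (cat (fun _ : Unit => inr 0) (fun t => lower (sub h1 h2 t))) v
              = cat (fun _ => inr 0) (fun t => lower (sub h1 (sub h2 
                (fun j : Fin m => raise (v j.succ))) t)) := by
            intro v hv
            rw [← sub_assoc]
            apply cat_ext
            · intro n
              simp [sub, hv]
            · intro n
              conv_lhs => rw [sub]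
              conv_rhs => rw [sub]
              simp only [cat_inr]
              rcases sub h1 h2 n with (_ | k) | i
              · simp [lower, hv]
              · simp [lower]
              · exact (lower_raise _).symm
          rw [key v hv0, key v' hv0']
          exact (hc _ (hr2.sub r1)).trans (hc _ (hr2.sub r2)).symm

theorem Rig.comp_iso {N N' K M : Type} [LinearOrder N] [LinearOrder N'] [LinearOrder M]
    {w : N → K ⊕ M} (hw : Rig w) (e : N' ≃o N) : Rig (fun t => w (e t)) := by
  constructor
  · intro m
    obtain ⟨t, ht⟩ := hw.1 m
    exact ⟨e.symm t, by simpa using ht⟩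
  · intro t m m' ht hm
    obtain ⟨s, hs, es⟩ := hw.2 _ _ _ ht hm
    refine ⟨e.symm s, ?_, by simpa using es⟩
    rw [← e.le_iff_le]
    simpa using hs

theorem Rig.map_iso {N K M M' : Type} [LinearOrder N] [LinearOrder M'] [LinearOrder M]
    {w : N → K ⊕ M} (hw : Rig w) (e : M ≃o M') : Rig (fun t => Sum.map id e (w t)) := by
  have key : ∀ x : K ⊕ M, ∀ m', Sum.map id e x = inr m' ↔ x = inr (e.symm m') := by
    rintro (x | x) m'
    · simp
    · simp [OrderIso.eq_symm_apply]
  constructor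
  · intro m
    obtain ⟨t, ht⟩ := hw.1 (e.symm m)
    exact ⟨t, by rw [key, ht]⟩
  · intro t m m' ht hm
    rw [key] at ht
    obtain ⟨s, hs, es⟩ := hw.2 _ _ (e.symm m') ht (by simpa using hm)
    exact ⟨s, hs, by rw [key, es]⟩

theorem gr_all (a : ℕ) : GR a := by
  induction a with
  | zero => exact gr0
  | succ a ih =>
    intro K B κ _ _ _ _ _
    classical
    obtain ⟨M, _, _, hM⟩ := cutpoint_lemma K B κ
    have := Fintype.ofFinite M
    let e : Fin (Fintype.card M) ≃o M := Fintype.orderIsoFinOfCardEq M rfl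
    obtain ⟨N, _, _, hN⟩ := tail_lemma ih (Fintype.card M) K κ
    refine ⟨N, inferInstance, inferInstance, fun χ => ?_⟩
    obtain ⟨h, hr, hh⟩ := hN χ
    have hc : ∃ c : (M → Option K) → κ, ∀ v : Fin (Fintype.card M) → K ⊕ Fin (a+1), Rig v →
        χ (sub h v) = c (cut (fun t => toO v (e.symm t))) := by
      have hce : ∀ v v' : Fin (Fintype.card M) → K ⊕ Fin (a+1), 
          cut (fun t => toO v (e.symm t)) = cut (fun t => toO v' (e.symm t)) →
          cut (toO v) = cut (toO v') := by
        have key : ∀ u : Fin (Fintype.card M) → Option K, 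
            cut u = fun t => cut (fun t => u (e.symm t)) (e t) := by
          intro u
          funext t
          refine cut_congr ?_ ?_
          · constructor
            · intro h s hs
              apply h
              rw [← e.le_iff_le]
              simpa using hs
            · intro h s hs
              simpa using h (e s) (by simpa using hs)
          · simp
        intro v v' hh
        rw [key (toO v), key (toO v'), hh]
      refine ⟨fun u => if hu : ∃ v : Fin (Fintype.card M) → K ⊕ Fin (a+1), Rig v ∧
          cut (fun t => toO v (e.symm t)) = u then χ (sub h hu.choose) else
          Classical.arbitrary κ, ?_⟩
      intro v hv
      have hu : ∃ v' : Fin (Fintype.card M) → K ⊕ Fin (a+1), Rig v' ∧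
          cut (fun t => toO v' (e.symm t)) = cut (fun t => toO v (e.symm t)) := ⟨v, hv, rfl⟩
      simp only [dif_pos hu]
      exact hh _ _ hv hu.choose_spec.1 (hce _ _ hu.choose_spec.2.symm)
    obtain ⟨c, hc⟩ := hc
    obtain ⟨g, hrg, hg⟩ := hM c
    have hrg' := hrg.comp_iso e
    refine ⟨sub h (fun t => g (e t)), hr.sub hrg', ?_⟩
    have key : ∀ v : B → K ⊕ Fin (a+1), Rig v → χ (sub (sub h (fun t => g (e t))) v) =
        c (cut (subO g (toO v))) := by
      intro v hv
      rw [sub_assoc, hc _ (hrg'.sub hv), toO_sub]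
      congr 2
      funext t
      simp [subO]
    by_cases hex : ∃ v : B → K ⊕ Fin (a+1), Rig v
    · obtain ⟨v0, hv0⟩ := hex
      refine ⟨χ (sub (sub h (fun t => g (e t))) v0), fun v hv => ?_⟩
      rw [key v hv, key v0 hv0]
      have : ∀ v : B → K ⊕ Fin (a+1), Rig v → ∃ b, toO v b = none := by
        intro v hv
        obtain ⟨t, ht⟩ := hv.1 0
        exact ⟨t, by simp [toO, ht]⟩
      exact hg _ _ (this v hv) (this v0 hv0)
    · exact ⟨Classical.arbitrary κ, fun v hv => absurd ⟨v, hv⟩ hex⟩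

/-- Graham-Rothschild. -/
theorem graham_rothschild (K A B κ : Type) [Finite K] [LinearOrder A] [Finite A] [LinearOrder B]
    [Finite B] [Finite κ] [Nonempty κ] :
    ∃ (N : Type) (_ : LinearOrder N) (_ : Finite N), ∀ χ : (N → K ⊕ A) → κ,
      ∃ h : N → K ⊕ B, Rig h ∧ ∃ c, ∀ v : B → K ⊕ A, Rig v → χ (sub h v) = c := by
  have := Fintype.ofFinite A
  let e : Fin (Fintype.card A) ≃o A := Fintype.orderIsoFinOfCardEq A rfl
  obtain ⟨N, _, _, hN⟩ := gr_all (Fintype.card A) K B κ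
  refine ⟨N, inferInstance, inferInstance, fun χ => ?_⟩
  obtain ⟨h, hr, c, hc⟩ := hN (fun w => χ (fun t => Sum.map id e (w t)))
  refine ⟨h, hr, c, fun v hv => ?_⟩
  rw [← hc _ (hv.map_iso e.symm)]
  congr 1
  funext t
  simp only [sub]
  rcases h t with k | b
  · simp
  · simp only [Sum.elim_inr]
    rcases v b with k | x <;> simp

/-- Ranked rigid surjections. -/
def Good {L C A : Type} [LinearOrder L] [LinearOrder C] [LinearOrder A] (ρC : C → L) (ρA : A → L)
    (g : C → A) : Prop :=
  (∀ a, ∃ c, g c = a ∧ ρC c = ρA a) ∧ (∀ c, ρA (g c) ≤ ρC c) ∧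
  ∀ c a, a ≤ g c → ∃ c', c' ≤ c ∧ g c' = a

theorem block_ramsey {L : Type} [LinearOrder L] (κ : Type) [Finite κ] [Nonempty κ] (n : ℕ) :
    ∀ (B A : Type) [LinearOrder B] [LinearOrder A] [Finite B] [Finite A] (ρB : B → L) (ρA : A → L),
    Monotone ρB → Monotone ρA → Nat.card B = n →
    ∃ (C : Type) (_ : LinearOrder C) (_ : Finite C) (ρC : C → L), Monotone ρC ∧
      (∀ c, ∃ b, ρC c = ρB b) ∧ ∀ χ : (C → A) → κ, ∃ h : C → B, Good ρC ρB h ∧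
        ∀ g g' : B → A, Good ρB ρA g → Good ρB ρA g' →
          χ (fun t => g (h t)) = χ (fun t => g' (h t)) := by
  induction n using Nat.strong_induction_on with
  | _ n ih =>
  intro B A _ _ _ _ ρB ρA mB mA hn
  classical
  rcases isEmpty_or_nonempty B with hB | hB
  · refine ⟨B, inferInstance, inferInstance, ρB, mB, fun c => ⟨c, rfl⟩, fun χ => ⟨id, ?_, ?_⟩⟩
    · exact ⟨fun a => hB.elim a, fun a => hB.elim a, fun a => hB.elim a⟩
    · intro g g' _ _
      rw [Subsingleton.elim g g']
  obtain ⟨b0, hb0⟩ := Finite.exists_max ρB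
  set l := ρB b0 with hl
  let B' := {b : B // ρB b < l}
  let Bm := {b : B // ¬ ρB b < l}
  let A' := {a : A // ρA a < l}
  let Am := {a : A // ¬ ρA a < l}
  have hcard : Nat.card B' < n := by
    rw [← hn]
    exact Finite.card_subtype_lt (x := b0) (by simp [hl])
  obtain ⟨C', _, _, ρC', mC', hC', hχ'⟩ := ih _ hcard B' A' (fun b => ρB b.1) (fun a => ρA a.1)
    (fun x y h => mB h) (fun x y h => mA h) rfl
  obtain ⟨N, _, _, hN⟩ := graham_rothschild C' Am Bm ((C' → A') → κ)
  have hCl : ∀ c, ρC' c < l := by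
    intro c
    obtain ⟨b, hb⟩ := hC' c
    rw [hb]
    exact b.2
  refine ⟨C' ⊕ₗ N, inferInstance, inferInstanceAs (Finite (C' ⊕ N)), cat ρC' (fun _ => l),
    ?_, ?_, fun χ => ?_⟩
  · refine lex_cases ?_ ?_
    · intro c
      refine lex_cases ?_ ?_
      · intro c' h
        exact mC' (by simpa using h)
      · intro t _
        exact (hCl c).le
    · intro t
      refine lex_cases ?_ ?_
      · intro c' h
        exact absurd h (lex_inr_not_le _ _)
      · intro t' _
        exact le_rfl
  · refine lex_cases ?_ ?_
    · intro c
      obtain ⟨b, hb⟩ := hC' c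
      exact ⟨b.1, hb⟩
    · intro t
      exact ⟨b0, rfl⟩
  · let word : (C' → A') → (N → C' ⊕ Am) → (C' ⊕ₗ N → A) := fun u q =>
      cat (fun c => (u c).1) (fun t => Sum.elim (fun c => (u c).1) (fun a => a.1) (q t))
    obtain ⟨hN, hrN, col, hcol⟩ := hN (fun q u => χ (word u q))
    obtain ⟨h', gh', hh'⟩ := hχ' col
    let h : C' ⊕ₗ N → B :=
      cat (fun c => (h' c).1) (fun t => Sum.elim (fun c => (h' c).1) (fun b => b.1) (hN t))
    have hle : ∀ b : Bm, ρB b.1 = l := fun b => le_antisymm (hb0 _) (not_lt.1 b.2)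
    refine ⟨h, ⟨?_, ?_, ?_⟩, ?_⟩
    · intro b
      by_cases hb : ρB b < l
      · obtain ⟨c, hc, hc'⟩ := gh'.1 ⟨b, hb⟩
        exact ⟨toLex (inl c), by simp [h, hc], hc'⟩
      · obtain ⟨t, ht⟩ := hrN.1 ⟨b, hb⟩
        exact ⟨toLex (inr t), by simp [h, ht], (hle ⟨b, hb⟩).symm⟩
    · refine lex_cases ?_ ?_
      · intro c
        exact gh'.2.1 c
      · intro t
        exact hb0 _
    · have aux : ∀ (c : C') (b : B), b ≤ (h' c).1 → ∃ c', c' ≤ c ∧ (h' c').1 = b := by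
        intro c b hb
        have hb' : ρB b < l := lt_of_le_of_lt (mB hb) (h' c).2
        obtain ⟨c', hc', e⟩ := gh'.2.2 c ⟨b, hb'⟩ hb
        exact ⟨c', hc', by rw [e]⟩
      refine lex_cases ?_ ?_
      · intro c b hb
        obtain ⟨c', hc', e⟩ := aux c b hb
        exact ⟨toLex (inl c'), by simpa using hc', e⟩
      · intro t b hb
        simp only [h, cat_inr] at hb
        rcases ht : hN t with c | b1
        · rw [ht] at hb
          obtain ⟨c', hc', e⟩ := aux c b hb
          exact ⟨toLex (inl c'), Sum.Lex.inl_le_inr _ _, e⟩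
        · rw [ht] at hb
          by_cases hbl : ρB b < l
          · obtain ⟨c, hc, hc'⟩ := gh'.1 ⟨b, hbl⟩
            exact ⟨toLex (inl c), Sum.Lex.inl_le_inr _ _, by simp [h, hc]⟩
          · obtain ⟨s, hs, es⟩ := hrN.2 t b1 ⟨b, hbl⟩ ht hb
            exact ⟨toLex (inr s), by simpa using hs, by simp [h, es]⟩
    · have key : ∀ g : B → A, Good ρB ρA g → ∃ g1 : B' → A',
          Good (fun b : B' => ρB b.1) (fun a : A' => ρA a.1) g1 ∧
          χ (fun t => g (h t)) = col (fun c => g1 (h' c)) := by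
        intro g hg
        let g1 : B' → A' := fun b => ⟨g b.1, lt_of_le_of_lt (hg.2.1 b.1) b.2⟩
        have hg1 : Good (fun b : B' => ρB b.1) (fun a : A' => ρA a.1) g1 := by
          refine ⟨?_, fun c => hg.2.1 c.1, ?_⟩
          · intro a
            obtain ⟨b, hb, e⟩ := hg.1 a.1
            exact ⟨⟨b, by rw [e]; exact a.2⟩, Subtype.ext hb, e⟩
          · intro c a ha
            obtain ⟨b, hb, e⟩ := hg.2.2 c.1 a.1 ha
            exact ⟨⟨b, lt_of_le_of_lt (mB hb) c.2⟩, hb, Subtype.ext e⟩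
        have hsurj : ∀ a : A', ∃ c, g1 (h' c) = a := by
          intro a
          obtain ⟨b, hb, _⟩ := hg1.1 a
          obtain ⟨c, hc, _⟩ := gh'.1 b
          exact ⟨c, by rw [hc, hb]⟩
        choose lift hlift using hsurj
        let v : Bm → C' ⊕ Am := fun b =>
          if hb : ρA (g b.1) < l then inl (lift ⟨g b.1, hb⟩) else inr ⟨g b.1, hb⟩
        have hvinr : ∀ b a, v b = inr a ↔ g b.1 = a.1 := by
          intro b a
          by_cases hb : ρA (g b.1) < l
          · simp only [v, dif_pos hb, reduceCtorEq, false_iff]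
            intro e
            exact a.2 (e ▸ hb)
          · simp only [v, dif_neg hb, inr.injEq]
            exact Subtype.ext_iff
        have hv : Rig v := by
          constructor
          · intro a
            obtain ⟨b, hb, e⟩ := hg.1 a.1
            exact ⟨⟨b, by rw [e]; exact a.2⟩, (hvinr _ _).2 hb⟩
          · intro b a a' hba haa
            rw [hvinr] at hba
            obtain ⟨b', hb', e⟩ := hg.2.2 b.1 a'.1 (by rw [hba]; exact haa)
            refine ⟨⟨b', fun hlt => a'.2 ?_⟩, hb', (hvinr _ _).2 e⟩
            rw [← e]
            exact lt_of_le_of_lt (hg.2.1 b') hlt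
        refine ⟨g1, hg1, ?_⟩
        rw [← hcol v hv]
        congr 1
        apply cat_ext
        · intro c
          rfl
        · intro t
          simp only [h, cat_inr, sub]
          rcases hN t with c | b
          · rfl
          · simp only [Sum.elim_inr, v]
            by_cases hb : ρA (g b.1) < l
            · simp only [dif_pos hb, Sum.elim_inl, hlift]
            · simp only [dif_neg hb, Sum.elim_inr]
      intro g g' hg hg'
      obtain ⟨g1, k1, e1⟩ := key g hg
      obtain ⟨g2, k2, e2⟩ := key g' hg'
      rw [e1, e2]
      exact hh' g1 g2 k1 k2

section Atoms

variable {X : Type} [BooleanAlgebra X]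

theorem atom_le_compl {a x : X} (ha : IsAtom a) : a ≤ xᶜ ↔ ¬ a ≤ x := by
  constructor
  · intro h h'
    apply ha.1
    have : a ≤ x ⊓ xᶜ := le_inf h' h
    simpa using this
  · intro h
    rcases ha.le_iff.1 (inf_le_left : a ⊓ x ≤ a) with h' | h'
    · exact le_compl_iff_disjoint_right.2 (disjoint_iff.2 h')
    · exact absurd (inf_eq_left.1 h') h

theorem atom_le_sup {a x y : X} (ha : IsAtom a) : a ≤ x ⊔ y ↔ a ≤ x ∨ a ≤ y := by
  constructor
  · intro h
    by_contra hh
    push Not at hh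
    have h1 := (atom_le_compl ha).2 hh.1
    have h2 := (atom_le_compl ha).2 hh.2
    have : a ≤ (x ⊔ y)ᶜ := by
      rw [compl_sup]
      exact le_inf h1 h2
    exact (atom_le_compl ha).1 this h
  · rintro (h | h)
    · exact le_sup_of_le_left h
    · exact le_sup_of_le_right h

end Atoms

open OrdAlg

variable {J : Type} [LinearOrder J]

theorem mem_P_of_atoms {A : OrdAlg J} (hA : A.IdealFam) (j : J) (hbot : ⊥ ∈ A.P j)
    (x : A.carrier) : (∀ a, IsAtom a → a ≤ x → a ∈ A.P j) → x ∈ A.P j := by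
  induction x using WellFoundedLT.induction with
  | _ x ih =>
  intro h
  rcases eq_bot_or_exists_atom_le x with rfl | ⟨a, ha, hax⟩
  · exact hbot
  · rw [← sup_sdiff_cancel_right hax]
    apply hA.2.2.1 j _ (h a ha hax)
    apply ih
    · refine lt_of_le_of_ne sdiff_le ?_
      intro e
      have h1 : a ≤ x \ a := by rw [e]; exact hax
      rw [sdiff_eq] at h1
      exact (atom_le_compl ha).1 (h1.trans inf_le_right) le_rfl
    · intro b hb hbx
      exact h b hb (hbx.trans sdiff_le)

/-- atoms. -/
@[ext] structure At (A : OrdAlg J) : Type where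
  /-- underlying element -/
  val : A.carrier
  /-- it is an atom -/
  prop : IsAtom val

instance (A : OrdAlg J) : Finite (At A) :=
  Finite.of_injective (fun a => a.val) (by intro a b h; exact At.ext h)


open Classical in
/-- The reversed linear order on atoms. -/
noncomputable def atLO (A : OrdAlg J) (hA : A.Natural) : LinearOrder (At A) where
  le a b := a = b ∨ A.lt b.1 a.1
  le_refl a := Or.inl rfl
  le_trans a b c := by
    have := hA.1
    rintro (rfl | h1) (rfl | h2)
    · exact Or.inl rfl
    · exact Or.inr h2
    · exact Or.inr h1
    · exact Or.inr (this.trans _ _ _ h2 h1)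
  le_antisymm a b := by
    have := hA.1
    rintro (rfl | h1) (h | h2)
    · rfl
    · rfl
    · exact h.symm
    · exact absurd (this.trans _ _ _ h2 h1) (this.irrefl _)
  le_total a b := by
    have := hA.1
    by_cases h1 : A.lt a.1 b.1
    · exact Or.inr (Or.inr h1)
    · by_cases h2 : A.lt b.1 a.1
      · exact Or.inl (Or.inr h2)
      · exact Or.inl (Or.inl (At.ext (this.trichotomous _ _ h1 h2)))
  toDecidableLE := Classical.decRel _

/-- rank of an atom. -/
def rk (A : OrdAlg J) (hA : A.IdealFam) (a : At A) : (UpperSet J)ᵒᵈ :=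
  OrderDual.toDual ⟨{j | a.1 ∈ A.P j}, fun i j hij h => hA.2.2.2 i j hij h⟩

/-- The set of a rank. -/
def rset (r : (UpperSet J)ᵒᵈ) : Set J := (OrderDual.ofDual r : UpperSet J)

theorem rset_upper (r : (UpperSet J)ᵒᵈ) {i j : J} (hij : i ≤ j) (h : i ∈ rset r) : j ∈ rset r :=
  (OrderDual.ofDual r).upper hij h

theorem rk_le_iff (r s : (UpperSet J)ᵒᵈ) : r ≤ s ↔ rset r ⊆ rset s := Iff.rfl

theorem rset_rk (A : OrdAlg J) (hA : A.IdealFam) (a : At A) (j : J) :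
    j ∈ rset (rk A hA a) ↔ a.1 ∈ A.P j := Iff.rfl

theorem rk_mono (A : OrdAlg J) (hA : A.IdealFam) (hN : A.Natural) :
    letI := atLO A hN
    Monotone (rk A hA) := by
  letI := atLO A hN
  intro a b hab
  rw [rk_le_iff]
  intro j hj
  rw [rset_rk] at hj ⊢
  by_contra hb
  have h1 : A.lt a.1 b.1 := hN.2.1 a.1 b.1 a.2 b.2 ⟨j, hj, hb⟩
  have := hN.1
  rcases hab with h | h
  · rw [h] at hj
    exact hb hj
  · exact this.irrefl _ (this.trans _ _ _ h h1)

/-- An embedding gives a good map on atoms. -/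
theorem good_of_emb {A B : OrdAlg J} (hA : A.IdealFam) (nA : A.Natural) (hB : B.IdealFam)
    (nB : B.Natural) (φ : Emb A B) :
    letI := atLO A nA
    letI := atLO B nB
    ∃ g : At B → At A, Good (rk B hB) (rk A hA) g ∧ ∀ b x, b.1 ≤ φ.toFun x ↔ (g b).1 ≤ x := by
  letI := atLO A nA
  letI := atLO B nB
  have monoφ : ∀ x y, x ≤ y → φ.toFun x ≤ φ.toFun y := by
    intro x y h
    rw [← sup_eq_right.2 h, φ.map_sup]
    exact le_sup_left
  have hex : ∀ b : At B, ∃ a : At A, b.1 ≤ φ.toFun a.1 := by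
    intro b
    by_contra hh
    push Not at hh
    have : ∀ x : A.carrier, ¬ b.1 ≤ φ.toFun x := by
      intro x
      induction x using WellFoundedLT.induction with
      | _ x ih =>
      rcases eq_bot_or_exists_atom_le x with rfl | ⟨a, ha, hax⟩
      · rw [φ.map_bot]
        intro h
        exact b.2.1 (le_bot_iff.1 h)
      · rw [← sup_sdiff_cancel_right hax, φ.map_sup, atom_le_sup b.2]
        rintro (h | h)
        · exact hh ⟨a, ha⟩ h
        · refine ih _ ?_ h
          refine lt_of_le_of_ne sdiff_le ?_
          intro e
          have h1 : a ≤ x \ a := by rw [e]; exact hax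
          rw [sdiff_eq] at h1
          exact (atom_le_compl ha).1 (h1.trans inf_le_right) le_rfl
    apply this ⊤
    rw [φ.map_top]
    exact le_top
  choose g hg using hex
  have key : ∀ b x, b.1 ≤ φ.toFun x ↔ (g b).1 ≤ x := by
    intro b x
    constructor
    · intro h
      by_contra hn
      have h1 := monoφ _ _ ((atom_le_compl (g b).2).2 hn)
      rw [φ.map_compl] at h1
      exact (atom_le_compl b.2).1 ((hg b).trans h1) h
    · intro h
      exact (hg b).trans (monoφ _ _ h)
  have atom_eq : ∀ a a' : At A, a.1 ≤ a'.1 → a = a' := by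
    intro a a' h
    rcases a'.2.le_iff.1 h with h' | h'
    · exact absurd h' a.2.1
    · exact At.ext h'
  have rkle : ∀ b, rk A hA (g b) ≤ rk B hB b := by
    intro b
    rw [rk_le_iff]
    intro j hj
    rw [rset_rk] at hj ⊢
    exact hB.2.1 j _ ((φ.map_P j _).1 hj) _ (hg b)
  refine ⟨g, ⟨?_, rkle, ?_⟩, key⟩
  · intro a
    have hne : φ.toFun a.1 ≠ ⊥ := by
      rw [← φ.map_bot]
      exact fun h => a.2.1 (φ.inj h)
    obtain ⟨b0, hb0, hb0'⟩ := (eq_bot_or_exists_atom_le (φ.toFun a.1)).resolve_left hne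
    obtain ⟨b, hb⟩ := (Set.toFinite {b : At B | b.1 ≤ φ.toFun a.1}).exists_minimal
      ⟨⟨b0, hb0⟩, hb0'⟩
    have hba : b.1 ≤ φ.toFun a.1 := hb.1
    have hgb : g b = a := atom_eq _ _ ((key b a.1).1 hba)
    refine ⟨b, hgb, le_antisymm ?_ (hgb ▸ rkle b)⟩
    rw [rk_le_iff]
    intro j hj
    rw [rset_rk, φ.map_P]
    apply mem_P_of_atoms hB j
    · exact hB.2.1 j _ hj _ bot_le
    · intro c hc hca
      have hbc : b ≤ ⟨c, hc⟩ := by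
        rcases le_total b ⟨c, hc⟩ with h | h
        · exact h
        · exact hb.2 hca h
      exact (rk_le_iff _ _).1 (rk_mono B hB nB hbc) hj
  · intro c a hac
    rcases hac with rfl | hlt
    · exact ⟨c, le_rfl, rfl⟩
    · rw [φ.map_lt] at hlt
      have hne : φ.toFun (g c).1 ≠ φ.toFun a.1 := by
        intro e
        rw [e] at hlt
        exact nB.1.irrefl _ hlt
      obtain ⟨c', hc', h1, h2, h3⟩ := (nB.2.2 _ _ hne).1 hlt
      have hca : ¬ c.1 ≤ φ.toFun a.1 := by
        intro h
        apply hne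
        rw [atom_eq _ _ ((key _ _).1 h)]
      refine ⟨⟨c', hc'⟩, ?_, atom_eq _ _ ((key ⟨c', hc'⟩ a.1).1 h1)⟩
      rcases h3 c.1 c.2 (fun h => hca (h.1 (hg c))) with h | h
      · exact Or.inl (At.ext h.symm)
      · exact Or.inr h

/-- The ordered algebra of a ranked linear order. -/
noncomputable def mkAlg (C : Type) [LinearOrder C] [Finite C] (ρ : C → (UpperSet J)ᵒᵈ)
    (E : Set J) : OrdAlg J where
  carrier := Set C
  ba := inferInstance
  fin := Fintype.ofFinite _
  P j := {S | j ∈ E ∧ ∀ c ∈ S, j ∈ rset (ρ c)}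
  lt S T := ∃ c, c ∈ T ∧ c ∉ S ∧ ∀ d, ¬ (d ∈ S ↔ d ∈ T) → c ≤ d

theorem setLt_trichotomous {C : Type} [LinearOrder C] [Finite C] (S T : Set C) (hST : S ≠ T) :
    (∃ c, c ∈ T ∧ c ∉ S ∧ ∀ d, ¬ (d ∈ S ↔ d ∈ T) → c ≤ d) ∨
    (∃ c, c ∈ S ∧ c ∉ T ∧ ∀ d, ¬ (d ∈ T ↔ d ∈ S) → c ≤ d) := by
  have hne : {d | ¬ (d ∈ S ↔ d ∈ T)}.Nonempty := by
    by_contra h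
    rw [Set.not_nonempty_iff_eq_empty] at h
    apply hST
    ext d
    by_contra hd
    have : d ∈ {d | ¬ (d ∈ S ↔ d ∈ T)} := hd
    rw [h] at this
    exact this
  obtain ⟨c, hc⟩ := (Set.toFinite _).exists_minimal hne
  have hmin : ∀ d, ¬ (d ∈ S ↔ d ∈ T) → c ≤ d := by
    intro d hd
    rcases le_total c d with h | h
    · exact h
    · exact hc.2 hd h
  have hc1 : ¬ (c ∈ S ↔ c ∈ T) := hc.1
  by_cases hcS : c ∈ S
  · right
    refine ⟨c, hcS, fun h => hc1 ⟨fun _ => h, fun _ => hcS⟩, fun d hd => hmin d (fun h => hd h.symm)⟩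
  · left
    refine ⟨c, ?_, hcS, hmin⟩
    by_contra h
    exact hc1 ⟨fun h' => absurd h' hcS, fun h' => absurd h' h⟩

theorem setLt_trans {C : Type} [LinearOrder C] (S T U : Set C)
    (h1 : ∃ c, c ∈ T ∧ c ∉ S ∧ ∀ d, ¬ (d ∈ S ↔ d ∈ T) → c ≤ d)
    (h2 : ∃ c, c ∈ U ∧ c ∉ T ∧ ∀ d, ¬ (d ∈ T ↔ d ∈ U) → c ≤ d) :
    ∃ c, c ∈ U ∧ c ∉ S ∧ ∀ d, ¬ (d ∈ S ↔ d ∈ U) → c ≤ d := by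
  obtain ⟨c, hcT, hcS, hc⟩ := h1
  obtain ⟨e, heU, heT, he⟩ := h2
  have hmin : ∀ d, ¬ (d ∈ S ↔ d ∈ U) → min c e ≤ d := by
    intro d hd
    by_cases h : d ∈ S ↔ d ∈ T
    · exact (min_le_right _ _).trans (he d (fun h' => hd (h.trans h')))
    · exact (min_le_left _ _).trans (hc d h)
  rcases lt_trichotomy c e with h | h | h
  · refine ⟨c, ?_, hcS, fun d hd => (min_eq_left h.le) ▸ hmin d hd⟩
    by_contra hcU
    exact absurd (he c (fun h' => hcU (h'.1 hcT))) (not_le.2 h)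
  · exact absurd hcT (h ▸ heT)
  · refine ⟨e, heU, ?_, fun d hd => (min_eq_right h.le) ▸ hmin d hd⟩
    intro heS
    exact absurd (hc e (fun h' => heT (h'.1 heS))) (not_le.2 h)

theorem mkAlg_mem {C : Type} [LinearOrder C] [Finite C] (ρ : C → (UpperSet J)ᵒᵈ)
    (mρ : Monotone ρ)
    (E : Set J) (hE : ∀ i j, i ≤ j → i ∈ E → j ∈ E) (hE' : ∀ c, rset (ρ c) ⊆ E)
    (hc : ∃ c, rset (ρ c) = ∅) : (mkAlg C ρ E).InNaBJ := by
  obtain ⟨c0, hc0⟩ := hc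
  refine ⟨⟨?_, ?_, ?_, ?_⟩, ⟨?_, ?_, ?_⟩, ?_⟩
  · rintro j ⟨_, h⟩
    have := h c0 trivial
    rw [hc0] at this
    exact this
  · rintro j x ⟨h1, h2⟩ y hy
    exact ⟨h1, fun c hc => h2 c (hy hc)⟩
  · rintro j x ⟨h1, h2⟩ y ⟨_, h3⟩
    exact ⟨h1, fun c hc => hc.elim (h2 c) (h3 c)⟩
  · rintro i j hij x ⟨h1, h2⟩
    exact ⟨hE i j hij h1, fun c hc => rset_upper _ hij (h2 c hc)⟩
  · exact
      { trichotomous := by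
          intro S T h1 h2
          by_contra hne
          rcases setLt_trichotomous S T hne with h | h
          · exact h1 h
          · exact h2 h
        irrefl := by
          rintro S ⟨c, h1, h2, _⟩
          exact h2 h1
        trans := fun S T U h1 h2 => setLt_trans S T U h1 h2 }
  · rintro (S : Set C) (T : Set C) hS hT ⟨i, h1, h2⟩
    obtain ⟨s, rfl⟩ := Set.isAtom_iff.1 hS
    obtain ⟨t, rfl⟩ := Set.isAtom_iff.1 hT
    have hs : i ∈ rset (ρ s) := h1.2 s rfl
    have ht : i ∉ rset (ρ t) := fun h => h2 ⟨h1.1, by rintro c rfl; exact h⟩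
    have hts : t < s := by
      by_contra hn
      exact ht ((rk_le_iff _ _).1 (mρ (not_lt.1 hn)) hs)
    refine ⟨t, rfl, fun h => hts.ne h, ?_⟩
    intro d hd
    by_cases hdt : d = t
    · exact hdt.ge
    · by_cases hds : d = s
      · rw [hds]; exact hts.le
      · exact absurd ⟨fun h => absurd h hds, fun h => absurd h hdt⟩ hd
  · intro S T hne
    have hle : ∀ (c : C) (U : Set C), ({c} : Set C) ≤ U ↔ c ∈ U := fun c U =>
      Set.singleton_subset_iff
    have hlt : ∀ c d : C, (mkAlg C ρ E).lt ({d} : Set C) ({c} : Set C) ↔ c < d := by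
      intro c d
      constructor
      · rintro ⟨e, he, he', h⟩
        have he1 : e = c := he
        subst he1
        have hed : e ≠ d := he'
        refine lt_of_le_of_ne (h d ?_) hed
        intro hh
        exact hed (hh.1 rfl).symm
      · intro h
        refine ⟨c, rfl, h.ne, ?_⟩
        intro e he
        by_cases h1 : e = c
        · exact h1.ge
        · by_cases h2 : e = d
          · rw [h2]; exact h.le
          · exact absurd ⟨fun h => absurd h h2, fun h => absurd h h1⟩ he
    constructor
    · rintro ⟨c, h1, h2, h3⟩
      refine ⟨({c} : Set C), Set.isAtom_singleton c, (hle c T).2 h1,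
        fun h => h2 ((hle c S).1 h), ?_⟩
      intro D hD hd
      obtain ⟨d, rfl⟩ := Set.isAtom_iff.1 hD
      have h4 := h3 d (fun h => hd ((hle d S).trans (h.trans (hle d T).symm)))
      rcases h4.eq_or_lt with h | h
      · left
        rw [h]
      · right
        exact (hlt c d).2 h
    · rintro ⟨D, hD, h1, h2, h3⟩
      obtain ⟨c, rfl⟩ := Set.isAtom_iff.1 hD
      refine ⟨c, (hle c T).1 h1, fun h => h2 ((hle c S).2 h), ?_⟩
      intro d hd
      rcases h3 ({d} : Set C) (Set.isAtom_singleton d)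
        (fun h => hd ((hle d S).symm.trans (h.trans (hle d T)))) with h | h
      · exact (Set.singleton_injective h).ge
      · exact ((hlt c d).1 h).le
  · refine ⟨({c0} : Set C), Set.isAtom_singleton c0, ?_⟩
    rintro j ⟨_, h⟩
    have := h c0 rfl
    rw [hc0] at this
    exact this

/-- A good map on atoms gives an embedding. -/
theorem emb_of_good {B : OrdAlg J} (hB : B.IdealFam) (nB : B.Natural) {C : Type} [LinearOrder C]
    [Finite C] (ρ : C → (UpperSet J)ᵒᵈ) (h : C → At B)
    (hh : letI := atLO B nB; Good ρ (rk B hB) h) :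
    ∃ e : Emb B (mkAlg C ρ {j | ⊥ ∈ B.P j}), ∀ x, e.toFun x = {c | (h c).1 ≤ x} := by
  letI := atLO B nB
  have hh : Good ρ (rk B hB) h := hh
  have fwd : ∀ x y, B.lt x y →
      (mkAlg C ρ {j | ⊥ ∈ B.P j}).lt {c : C | (h c).1 ≤ x} {c : C | (h c).1 ≤ y} := by
    intro x y hxy
    have hne : x ≠ y := by
      rintro rfl
      exact nB.1.irrefl _ hxy
    obtain ⟨b, hb, h1, h2, h3⟩ := (nB.2.2 x y hne).1 hxy
    obtain ⟨c1, hc1, _⟩ := hh.1 ⟨b, hb⟩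
    obtain ⟨c, hc⟩ := (Set.toFinite {c | h c = ⟨b, hb⟩}).exists_minimal ⟨c1, hc1⟩
    have hcb : h c = ⟨b, hb⟩ := hc.1
    refine ⟨c, ?_, ?_, ?_⟩
    · change (h c).1 ≤ y
      rw [hcb]; exact h1
    · change ¬ (h c).1 ≤ x
      rw [hcb]; exact h2
    · intro d hd
      have hbd : (⟨b, hb⟩ : At B) ≤ h d := by
        rcases h3 (h d).1 (h d).2 hd with e | e
        · exact Or.inl (At.ext e.symm)
        · exact Or.inr e
      obtain ⟨c', hc', e⟩ := hh.2.2 d _ hbd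
      rcases le_total c c' with h4 | h4
      · exact h4.trans hc'
      · exact (hc.2 e h4).trans hc'
  have asymm : ∀ S T : Set C, (mkAlg C ρ {j | ⊥ ∈ B.P j}).lt S T →
      ¬ (mkAlg C ρ {j | ⊥ ∈ B.P j}).lt T S := by
    intro S T h1 h2
    obtain ⟨c, h3, h4, _⟩ := setLt_trans S T S h1 h2
    exact h4 h3
  refine ⟨⟨fun x => {c : C | (h c).1 ≤ x}, ?_, ?_, ?_, ?_, ?_, ?_, ?_, ?_⟩, fun x => rfl⟩
  · intro x y hxy
    by_contra hne
    have hxy' : {c : C | (h c).1 ≤ x} = {c : C | (h c).1 ≤ y} := hxy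
    apply hne
    rw [BooleanAlgebra.eq_iff_atom_le_iff]
    intro a ha
    obtain ⟨c, hc, _⟩ := hh.1 ⟨a, ha⟩
    have := Set.ext_iff.1 hxy' c
    simpa [hc] using this
  · intro x y
    apply Set.ext
    intro c
    exact atom_le_sup (h c).2
  · intro x y
    apply Set.ext
    intro c
    exact le_inf_iff
  · intro x
    apply Set.ext
    intro c
    exact atom_le_compl (h c).2
  · apply Set.ext
    intro c
    exact ⟨fun hc => (h c).2.1 (le_bot_iff.1 hc), fun hc => hc.elim⟩
  · apply Set.ext
    intro c
    exact ⟨fun _ => trivial, fun _ => le_top⟩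
  · intro x y
    refine ⟨fwd x y, fun hlt => ?_⟩
    by_contra hn
    by_cases hyx : B.lt y x
    · exact asymm _ _ hlt (fwd y x hyx)
    · have := nB.1.trichotomous _ _ hn hyx
      subst this
      exact asymm _ _ hlt hlt
  · intro j x
    constructor
    · intro hx
      refine ⟨hB.2.1 j x hx _ bot_le, fun c hc => ?_⟩
      exact (rk_le_iff _ _).1 (hh.2.1 c) (hB.2.1 j x hx _ hc)
    · rintro ⟨h1, h2⟩
      apply mem_P_of_atoms hB j h1
      intro a ha hax
      obtain ⟨c, hc, e⟩ := hh.1 ⟨a, ha⟩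
      have := h2 c (by change (h c).1 ≤ x; rw [hc]; exact hax)
      rw [e] at this
      exact this

/-- Factor an embedding through another. -/
theorem emb_factor {A B C : OrdAlg J} (e1 : Emb A C) (e : Emb B C)
    (h : Set.range e1.toFun ⊆ Set.range e.toFun) :
    ∃ φ : Emb A B, ∀ x, e.toFun (φ.toFun x) = e1.toFun x := by
  have : ∀ x, ∃ y, e.toFun y = e1.toFun x := fun x => h ⟨x, rfl⟩
  choose f hf using this
  refine ⟨⟨f, ?_, ?_, ?_, ?_, ?_, ?_, ?_, ?_⟩, hf⟩
  · intro x y hxy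
    apply e1.inj
    rw [← hf, ← hf, hxy]
  · intro x y
    apply e.inj
    rw [hf, e.map_sup, hf, hf, e1.map_sup]
  · intro x y
    apply e.inj
    rw [hf, e.map_inf, hf, hf, e1.map_inf]
  · intro x
    apply e.inj
    rw [hf, e.map_compl, hf, e1.map_compl]
  · apply e.inj
    rw [hf, e.map_bot, e1.map_bot]
  · apply e.inj
    rw [hf, e.map_top, e1.map_top]
  · intro x y
    rw [e.map_lt, hf, hf, e1.map_lt]
  · intro j x
    rw [e.map_P, hf, e1.map_P]

end NaRamsey

theorem naBJ_ramsey_property {J : Type} [LinearOrder J]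
    (A B : OrdAlg J) (hA : A.InNaBJ) (hB : B.InNaBJ)
    (hAB : Nonempty (OrdAlg.Emb A B))
    (k : ℕ) (hk : 2 ≤ k) :
    ∃ C : OrdAlg J, C.InNaBJ ∧
      ∀ χ : Set C.carrier → Fin k,
        ∃ e : OrdAlg.Emb B C,
          ∀ S₁ ∈ OrdAlg.Copies A C, ∀ S₂ ∈ OrdAlg.Copies A C,
            S₁ ⊆ Set.range e.toFun → S₂ ⊆ Set.range e.toFun → χ S₁ = χ S₂ := by
  obtain ⟨iA, nA, _⟩ := hA
  obtain ⟨iB, nB, b0, hb0, hb0'⟩ := hB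
  letI := NaRamsey.atLO A nA
  letI := NaRamsey.atLO B nB
  haveI : Nonempty (Fin k) := ⟨⟨0, by omega⟩⟩
  obtain ⟨C, _, _, ρ, mρ, hρ, hC⟩ := NaRamsey.block_ramsey (Fin k) _ (NaRamsey.At B)
    (NaRamsey.At A) (NaRamsey.rk B iB) (NaRamsey.rk A iA) (NaRamsey.rk_mono B iB nB)
    (NaRamsey.rk_mono A iA nA) rfl
  refine ⟨NaRamsey.mkAlg C ρ {j | ⊥ ∈ B.P j}, NaRamsey.mkAlg_mem ρ mρ _ ?_ ?_ ?_, ?_⟩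
  · intro i j hij h
    exact iB.2.2.2 i j hij h
  · intro c j hj
    obtain ⟨b, hb⟩ := hρ c
    rw [hb, NaRamsey.rset_rk] at hj
    exact iB.2.1 j _ hj _ bot_le
  · obtain ⟨h, hh, _⟩ := hC (fun _ => Classical.arbitrary _)
    obtain ⟨c, hc, e⟩ := hh.1 ⟨b0, hb0⟩
    refine ⟨c, ?_⟩
    rw [e]
    ext j
    rw [NaRamsey.rset_rk]
    exact ⟨fun h => hb0' j h, fun h => h.elim⟩
  · intro χ
    obtain ⟨h, hh, hcol⟩ := hC (fun w => χ (Set.range (fun x => {c : C | (w c).1 ≤ x})))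
    obtain ⟨e, he⟩ := NaRamsey.emb_of_good iB nB ρ h hh
    refine ⟨e, ?_⟩
    have key : ∀ S ∈ OrdAlg.Copies A (NaRamsey.mkAlg C ρ {j | ⊥ ∈ B.P j}),
        S ⊆ Set.range e.toFun → ∃ g : NaRamsey.At B → NaRamsey.At A,
          NaRamsey.Good (NaRamsey.rk B iB) (NaRamsey.rk A iA) g ∧
          S = Set.range (fun x => {c : C | (g (h c)).1 ≤ x}) := by
      rintro S ⟨e1, rfl⟩ hS
      obtain ⟨φ, hφ⟩ := NaRamsey.emb_factor e1 e hS
      obtain ⟨g, hg, hg'⟩ := NaRamsey.good_of_emb iA nA iB nB φ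
      refine ⟨g, hg, ?_⟩
      congr 1
      funext x
      rw [← hφ, he]
      apply Set.ext
      intro c
      exact hg' (h c) x
    intro S₁ h₁ S₂ h₂ r₁ r₂
    obtain ⟨g₁, k₁, rfl⟩ := key S₁ h₁ r₁
    obtain ⟨g₂, k₂, rfl⟩ := key S₂ h₂ r₂
    exact hcol g₁ g₂ k₁ k₂
end
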